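/- For every real k ≠ 0 and every fixed u ∈ ℝ, the function Φ_{τ,k}(u) satisfies, as τ → 0+, Φ_{τ,k}(u) = e^{−ζ(k)²u²/2}·(1 + φ₁(k,u)·τ^{1/8} + φ₂(k,u)·τ^{1/4} + O(τ^{3/8})). -/

import Mathlib

open Filter Topology Asymptotics MeasureTheory

set_option linter.unusedVariables false

noncomputable section


/-- sign convention of the paper: 1 if `0 ≤ x`, -1 otherwise. -/
def sgn' (x : ℝ) : ℝ := if 0 ≤ x then 1 else -1

/-- principal-branch complex square root `d` of the Heston Riccati discriminant. -/
def hestD (κ ρ ξ : ℝ) (w : ℂ) : ℂ :=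
  (((κ : ℂ) - (ρ : ℂ) * (ξ : ℂ) * w) ^ 2 + w * (1 - w) * (ξ : ℂ) ^ 2) ^ ((1 : ℂ) / 2)

def hestGamma (κ ρ ξ : ℝ) (w : ℂ) : ℂ :=
  ((κ : ℂ) - (ρ : ℂ) * (ξ : ℂ) * w - hestD κ ρ ξ w) /
    ((κ : ℂ) - (ρ : ℂ) * (ξ : ℂ) * w + hestD κ ρ ξ w)

def hestB (κ ρ ξ : ℝ) (w : ℂ) (τ : ℝ) : ℂ :=
  (((κ : ℂ) - (ρ : ℂ) * (ξ : ℂ) * w - hestD κ ρ ξ w) / (ξ : ℂ) ^ 2) *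
    ((1 - Complex.exp (-(hestD κ ρ ξ w) * (τ : ℂ))) /
      (1 - hestGamma κ ρ ξ w * Complex.exp (-(hestD κ ρ ξ w) * (τ : ℂ))))

def hestA (κ θ ρ ξ : ℝ) (w : ℂ) (τ : ℝ) : ℂ :=
  ((κ * θ / ξ ^ 2 : ℝ) : ℂ) *
    (((κ : ℂ) - (ρ : ℂ) * (ξ : ℂ) * w - hestD κ ρ ξ w) * (τ : ℂ) -
      2 * Complex.log ((1 - hestGamma κ ρ ξ w * Complex.exp (-(hestD κ ρ ξ w) * (τ : ℂ))) /
        (1 - hestGamma κ ρ ξ w)))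

def betaT (κ ξ t : ℝ) : ℝ := ξ ^ 2 * (1 - Real.exp (-(κ * t))) / (4 * κ)

/-- explicit Heston forward log-mgf `G_τ(w)`. -/
def hestG (κ θ ξ v ρ t : ℝ) (w : ℂ) (τ : ℝ) : ℂ :=
  hestA κ θ ρ ξ w τ +
    hestB κ ρ ξ w τ * (v : ℂ) * ((Real.exp (-(κ * t)) : ℝ) : ℂ) /
      (1 - 2 * (betaT κ ξ t : ℂ) * hestB κ ρ ξ w τ) -
    ((2 * κ * θ / ξ ^ 2 : ℝ) : ℂ) *
      Complex.log (1 - 2 * (betaT κ ξ t : ℂ) * hestB κ ρ ξ w τ)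

/-- rescaled forward log-mgf, for complex argument. -/
def hestLambdaC (κ θ ξ v ρ t τ : ℝ) (z : ℂ) : ℂ :=
  ((Real.sqrt τ : ℝ) : ℂ) * hestG κ θ ξ v ρ t (z / ((Real.sqrt τ : ℝ) : ℂ)) τ

/-- rescaled forward log-mgf `Λ_τ(u) = √τ · G_τ(u/√τ)`. -/
def hestLambda (κ θ ξ v ρ t τ : ℝ) (u : ℝ) : ℂ :=
  hestLambdaC κ θ ξ v ρ t τ (u : ℂ)

/-- `D_{t,τ}`: the maximal open interval containing `0` on which `Λ_τ` is real-valued. -/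
def hestDom (κ θ ξ v ρ t τ : ℝ) : Set ℝ :=
  connectedComponentIn (interior {u : ℝ | (hestLambda κ θ ξ v ρ t τ u).im = 0}) 0



def B1hat (ρ ξ u : ℝ) : ℝ := u / 4 * (u ^ 2 * ρ * ξ - 2)
/-- the derivative of `B1hat` in `u`. -/
def B1hat' (ρ ξ u : ℝ) : ℝ := (3 * u ^ 2 * ρ * ξ - 2) / 4

def coefA0 (κ θ ξ v ρ t k : ℝ) : ℝ := sgn' k / Real.sqrt (betaT κ ξ t)

def coefA1 (κ θ ξ v ρ t k : ℝ) : ℝ :=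
  -(coefA0 κ θ ξ v ρ t k) * Real.sqrt v * Real.exp (-(κ * t) / 2) /
    (2 * Real.sqrt |k| * betaT κ ξ t ^ ((1 : ℝ) / 4))

def coefA2 (κ θ ξ v ρ t k : ℝ) : ℝ :=
  -(κ * θ) / (k * ξ ^ 2) - B1hat ρ ξ (coefA0 κ θ ξ v ρ t k) / coefA0 κ θ ξ v ρ t k

def coefA3 (κ θ ξ v ρ t k : ℝ) : ℝ :=
  (2 * betaT κ ξ t * coefA1 κ θ ξ v ρ t k ^ 3 / (ξ ^ 4 * v ^ 2)) *
    (ξ ^ 2 * v * betaT κ ξ t * Real.exp (κ * t) *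
        (|k| * ξ ^ 2 * Real.sqrt (betaT κ ξ t) * B1hat ρ ξ (coefA0 κ θ ξ v ρ t k) -
          k * ξ ^ 2 * B1hat' ρ ξ (coefA0 κ θ ξ v ρ t k) - κ * θ) +
      (2 * κ * θ * betaT κ ξ t * Real.exp (κ * t)) ^ 2 - ξ ^ 4 * v ^ 2 / 16)

def coefE0 (κ θ ξ v ρ t k : ℝ) : ℝ := -2 * coefA1 κ θ ξ v ρ t k / coefA0 κ θ ξ v ρ t k

def coefR (κ θ ξ v ρ t k : ℝ) : ℝ :=
  coefA1 κ θ ξ v ρ t k ^ 2 / 2 - κ * θ / (|k| * ξ ^ 2 * Real.sqrt (betaT κ ξ t))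

def coefE1 (κ θ ξ v ρ t k : ℝ) : ℝ := -2 * betaT κ ξ t * coefR κ θ ξ v ρ t k

def coefE2 (κ θ ξ v ρ t k : ℝ) : ℝ :=
  -2 * betaT κ ξ t *
    (coefA1 κ θ ξ v ρ t k * coefA2 κ θ ξ v ρ t k + coefA0 κ θ ξ v ρ t k * coefA3 κ θ ξ v ρ t k +
      coefA1 κ θ ξ v ρ t k * B1hat' ρ ξ (coefA0 κ θ ξ v ρ t k))

def coefZeta (κ θ ξ v ρ t k : ℝ) : ℝ :=
  2 * Real.sqrt v * Real.exp (-(κ * t) / 2) / coefE0 κ θ ξ v ρ t k ^ ((3 : ℝ) / 2)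

def coefPsi0 (κ θ ξ v ρ t k : ℝ) : ℝ :=
  (coefA0 κ θ ξ v ρ t k * v * Real.exp (-(κ * t)) / coefE0 κ θ ξ v ρ t k ^ 3) *
    (coefE0 κ θ ξ v ρ t k ^ 2 +
      coefA0 κ θ ξ v ρ t k * betaT κ ξ t *
        (3 * coefA1 κ θ ξ v ρ t k * coefE0 κ θ ξ v ρ t k -
          2 * coefA0 κ θ ξ v ρ t k * coefE1 κ θ ξ v ρ t k))

def coefPsi1 (κ θ ξ v ρ t k : ℝ) : ℝ :=
  -4 * coefA0 κ θ ξ v ρ t k * v * betaT κ ξ t * Real.exp (-(κ * t)) / coefE0 κ θ ξ v ρ t k ^ 4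

def coefPsi2 (κ θ ξ v ρ t k : ℝ) : ℝ :=
  (v * Real.exp (-(κ * t)) / (2 * coefE0 κ θ ξ v ρ t k ^ 4)) *
    (4 * coefA0 κ θ ξ v ρ t k * betaT κ ξ t *
        (3 * coefA0 κ θ ξ v ρ t k * coefE1 κ θ ξ v ρ t k -
          4 * coefA1 κ θ ξ v ρ t k * coefE0 κ θ ξ v ρ t k) -
      5 * coefE0 κ θ ξ v ρ t k ^ 2)

def coefPsi3 (κ θ ξ v ρ t k : ℝ) : ℝ :=
  8 * v * betaT κ ξ t * Real.exp (-(κ * t)) / coefE0 κ θ ξ v ρ t k ^ 5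

def coefPsi4 (κ θ ξ v ρ t k : ℝ) : ℝ :=
  (v * Real.exp (-(κ * t)) / (2 * coefE0 κ θ ξ v ρ t k ^ 3)) *
    ((coefE1 κ θ ξ v ρ t k ^ 2 - coefE0 κ θ ξ v ρ t k * coefE2 κ θ ξ v ρ t k) / betaT κ ξ t -
      2 * coefA0 κ θ ξ v ρ t k * coefA1 κ θ ξ v ρ t k * coefE0 κ θ ξ v ρ t k *
        coefE1 κ θ ξ v ρ t k +
      2 * coefE0 κ θ ξ v ρ t k ^ 2 * coefR κ θ ξ v ρ t k)

def coefPhi2a (κ θ ξ v ρ t k : ℝ) : ℝ :=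
  coefPsi2 κ θ ξ v ρ t k - coefPsi0 κ θ ξ v ρ t k ^ 2 / 2 -
    (4 * κ * θ * betaT κ ξ t / ξ ^ 2) * (2 * κ * θ + ξ ^ 2) / (coefE0 κ θ ξ v ρ t k ^ 2 * ξ ^ 2) -
    (4 * κ * θ * betaT κ ξ t / ξ ^ 2) *
      (coefA0 κ θ ξ v ρ t k * coefPsi0 κ θ ξ v ρ t k / coefE0 κ θ ξ v ρ t k)

def coefPhi2b (κ θ ξ v ρ t k : ℝ) : ℝ :=
  coefPsi3 κ θ ξ v ρ t k - coefPsi0 κ θ ξ v ρ t k * coefPsi1 κ θ ξ v ρ t k -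
    (4 * κ * θ * betaT κ ξ t / ξ ^ 2) *
      (coefA0 κ θ ξ v ρ t k * coefPsi1 κ θ ξ v ρ t k / coefE0 κ θ ξ v ρ t k)

def coefPhi2c (κ θ ξ v ρ t k : ℝ) : ℝ := -(coefPsi1 κ θ ξ v ρ t k ^ 2) / 2

def coefC0 (κ θ ξ v ρ t k : ℝ) : ℝ := 2 * |coefA1 κ θ ξ v ρ t k * k|

def coefC1 (κ θ ξ v ρ t k : ℝ) : ℝ :=
  (v * Real.exp (-(κ * t)) / coefE0 κ θ ξ v ρ t k) *
      (coefA0 κ θ ξ v ρ t k * coefA1 κ θ ξ v ρ t k -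
        coefE1 κ θ ξ v ρ t k / (2 * betaT κ ξ t * coefE0 κ θ ξ v ρ t k)) -
    coefA2 κ θ ξ v ρ t k * k

def coefC2 (κ θ ξ v ρ t k : ℝ) : ℝ := coefE0 κ θ ξ v ρ t k ^ (-(2 * κ * θ / ξ ^ 2))

def coefZ1 (κ θ ξ v ρ t k : ℝ) : ℝ :=
  coefPsi4 κ θ ξ v ρ t k - coefA3 κ θ ξ v ρ t k * k -
    (2 * κ * θ / ξ ^ 2) * (coefE1 κ θ ξ v ρ t k / coefE0 κ θ ξ v ρ t k)

def coefP1 (κ θ ξ v ρ t k : ℝ) : ℝ :=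
  coefE0 κ θ ξ v ρ t k + coefPhi2a κ θ ξ v ρ t k / coefZeta κ θ ξ v ρ t k ^ 2 +
    3 * coefPhi2b κ θ ξ v ρ t k / coefZeta κ θ ξ v ρ t k ^ 4 +
    15 * coefPhi2c κ θ ξ v ρ t k / coefZeta κ θ ξ v ρ t k ^ 6

def phi1C (κ θ ξ v ρ t k u : ℝ) : ℂ :=
  Complex.I * (u : ℂ) *
      ((coefPsi0 κ θ ξ v ρ t k +
          4 * coefA0 κ θ ξ v ρ t k * κ * θ * betaT κ ξ t / (coefE0 κ θ ξ v ρ t k * ξ ^ 2) : ℝ) : ℂ) +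
    Complex.I * (u : ℂ) ^ 3 * ((coefPsi1 κ θ ξ v ρ t k : ℝ) : ℂ)

def phi2R (κ θ ξ v ρ t k u : ℝ) : ℝ :=
  u ^ 2 * coefPhi2a κ θ ξ v ρ t k + u ^ 4 * coefPhi2b κ θ ξ v ρ t k +
    u ^ 6 * coefPhi2c κ θ ξ v ρ t k


/-- the characteristic function `Φ_{τ,k}(u)` under the asymptotic measure change. -/
def hestPhi (κ θ ξ v ρ t k : ℝ) (ustar : ℝ → ℝ) (τ u : ℝ) : ℂ :=
  Complex.exp (-(Complex.I) * (u : ℂ) * (k : ℂ) * ((τ ^ (-(1 : ℝ) / 8) : ℝ) : ℂ) +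
    ((τ ^ (-(1 : ℝ) / 2) : ℝ) : ℂ) *
      (hestLambdaC κ θ ξ v ρ t τ
          ((ustar τ : ℝ) + Complex.I * (u : ℂ) * ((τ ^ ((3 : ℝ) / 8) : ℝ) : ℂ)) -
        hestLambdaC κ θ ξ v ρ t τ ((ustar τ : ℝ) : ℂ)))

/-! ### Entire functions `cosh √y` and `sinh √y / √y` -/

def Chh (y : ℂ) : ℂ := ∑' n : ℕ, y ^ n / ((2 * n).factorial : ℂ)
def Shh (y : ℂ) : ℂ := ∑' n : ℕ, y ^ n / ((2 * n + 1).factorial : ℂ)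

lemma Chh_sq (m : ℂ) : Chh (m ^ 2) = Complex.cosh m := by
  rw [Chh, ← (Complex.hasSum_cosh m).tsum_eq]
  simp [pow_mul]

lemma Shh_sq (m : ℂ) : m * Shh (m ^ 2) = Complex.sinh m := by
  rw [Shh, ← (Complex.hasSum_sinh m).tsum_eq, ← tsum_mul_left]
  refine tsum_congr fun n => ?_
  rw [pow_succ m (2 * n), pow_mul]; ring

lemma Chh_zero : Chh 0 = 1 := by
  have := Chh_sq 0
  simpa using this

lemma Shh_zero : Shh 0 = 1 := by
  rw [Shh, tsum_eq_single 0]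
  · simp
  · intro n hn; simp [hn]

lemma summable_inv_fact : Summable (fun n : ℕ => 1 / (n.factorial : ℝ)) := by
  simpa using Real.summable_pow_div_factorial 1

lemma series_diff (g : ℕ → ℕ) (hg : ∀ n, n ≤ g n) :
    DifferentiableOn ℂ (fun y : ℂ => ∑' n : ℕ, y ^ n / ((g n).factorial : ℂ)) (Metric.ball 0 1) := by
  refine Complex.differentiableOn_tsum_of_summable_norm summable_inv_fact ?_ Metric.isOpen_ball ?_
  · intro i
    exact (by fun_prop : Differentiable ℂ (fun y : ℂ => y ^ i / ((g i).factorial : ℂ))).differentiableOn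
  · intro i w hw
    have hw1 : ‖w‖ ≤ 1 := by simpa using (mem_ball_zero_iff.mp hw).le
    rw [norm_div, norm_pow, Complex.norm_natCast]
    have h1 : (i.factorial : ℝ) ≤ (g i).factorial := by exact_mod_cast Nat.factorial_le (hg i)
    have h0 : (0 : ℝ) < i.factorial := by exact_mod_cast Nat.factorial_pos i
    gcongr
    exact pow_le_one₀ (norm_nonneg _) hw1

lemma Chh_diff : DifferentiableOn ℂ Chh (Metric.ball 0 1) :=
  series_diff (fun n => 2 * n) (fun n => by omega)

lemma Shh_diff : DifferentiableOn ℂ Shh (Metric.ball 0 1) :=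
  series_diff (fun n => 2 * n + 1) (fun n => by omega)

lemma Chh_real (y : ℝ) : ∃ r : ℝ, Chh (y : ℂ) = (r : ℂ) :=
  ⟨∑' n : ℕ, y ^ n / ((2 * n).factorial : ℝ), by rw [Chh]; push_cast; rfl⟩

lemma Shh_real (y : ℝ) : ∃ r : ℝ, Shh (y : ℂ) = (r : ℂ) :=
  ⟨∑' n : ℕ, y ^ n / ((2 * n + 1).factorial : ℝ), by rw [Shh]; push_cast; rfl⟩

lemma Chh_O : (fun y : ℂ => Chh y - 1) =O[𝓝 0] fun y => y := by
  have h := ((Chh_diff 0 (by simp)).differentiableAt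
    (Metric.isOpen_ball.mem_nhds (by simp))).isBigO_sub
  simpa [Chh_zero] using h

lemma Shh_O : (fun y : ℂ => Shh y - 1) =O[𝓝 0] fun y => y := by
  have h := ((Shh_diff 0 (by simp)).differentiableAt
    (Metric.isOpen_ball.mem_nhds (by simp))).isBigO_sub
  simpa [Shh_zero] using h

/-! ### Smooth versions of `A`, `B`, in the rescaled variables `s = √τ`, `z = w √τ` -/

def Qf (κ ρ ξ : ℝ) (s : ℝ) (z : ℂ) : ℂ :=
  ((κ : ℂ) * s - ρ * ξ * z) ^ 2 + z * (s - z) * (ξ : ℂ) ^ 2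

def Yf (κ ρ ξ : ℝ) (s : ℝ) (z : ℂ) : ℂ := (s : ℂ) ^ 2 * Qf κ ρ ξ s z / 4

def Df (κ ρ ξ : ℝ) (s : ℝ) (z : ℂ) : ℂ :=
  Chh (Yf κ ρ ξ s z) + s * (κ * s - ρ * ξ * z) / 2 * Shh (Yf κ ρ ξ s z)

def Bf (κ ρ ξ : ℝ) (s : ℝ) (z : ℂ) : ℂ :=
  z * (z - s) / 2 * (Shh (Yf κ ρ ξ s z) / Df κ ρ ξ s z)

def Af (κ θ ρ ξ : ℝ) (s : ℝ) (z : ℂ) : ℂ :=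
  ((κ * θ / ξ ^ 2 : ℝ) : ℂ) * (s * (κ * s - ρ * ξ * z) - 2 * Complex.log (Df κ ρ ξ s z))

def Gf (κ θ ξ v ρ t : ℝ) (s : ℝ) (z : ℂ) : ℂ :=
  Af κ θ ρ ξ s z +
    Bf κ ρ ξ s z * (v : ℂ) * ((Real.exp (-(κ * t)) : ℝ) : ℂ) /
      (1 - 2 * (betaT κ ξ t : ℂ) * Bf κ ρ ξ s z) -
    ((2 * κ * θ / ξ ^ 2 : ℝ) : ℂ) *
      Complex.log (1 - 2 * (betaT κ ξ t : ℂ) * Bf κ ρ ξ s z)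

/-- identification of the explicit formula with the smooth one, away from removable points -/
lemma hestG_eq (κ θ ξ v ρ t : ℝ) (hξ : 0 < ξ) (s : ℝ) (hs : 0 < s) (z : ℂ)
    (hz : z ≠ 0) (hzs : z ≠ s) (hQ : Qf κ ρ ξ s z ≠ 0) (hY : ‖Yf κ ρ ξ s z‖ < 1)
    (hD : 0 < (Df κ ρ ξ s z).re) :
    hestG κ θ ξ v ρ t (z / (s : ℂ)) (s ^ 2) = Gf κ θ ξ v ρ t s z := by
  have hs' : (s : ℂ) ≠ 0 := by exact_mod_cast hs.ne'
  have hξ' : (ξ : ℂ) ≠ 0 := by exact_mod_cast hξ.ne'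
  obtain ⟨w, hw⟩ : ∃ w : ℂ, w = z / s := ⟨_, rfl⟩
  have hzw : z = w * s := by rw [hw]; field_simp
  obtain ⟨p, hp⟩ : ∃ p : ℂ, p = (κ : ℂ) - ρ * ξ * w := ⟨_, rfl⟩
  obtain ⟨d, hd⟩ : ∃ d : ℂ, d = hestD κ ρ ξ w := ⟨_, rfl⟩
  have hd2 : d ^ 2 = p ^ 2 + w * (1 - w) * (ξ : ℂ) ^ 2 := by
    rw [hd, hestD, hp]
    rw [one_div]
    exact Complex.cpow_nat_inv_pow _ two_ne_zero
  have hQd : Qf κ ρ ξ s z = s ^ 2 * d ^ 2 := by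
    rw [hd2, Qf, hp, hzw]; ring
  have hd0 : d ≠ 0 := by
    rintro h; apply hQ; rw [hQd, h]; ring
  have hpd : (p + d) * (p - d) = w * (w - 1) * (ξ : ℂ) ^ 2 := by linear_combination -hd2
  have hw0 : w ≠ 0 := by rintro h; apply hz; rw [hzw, h, zero_mul]
  have hw1 : w - 1 ≠ 0 := by
    rintro h; apply hzs; rw [hzw, sub_eq_zero.mp h, one_mul]
  have hpd0 : p + d ≠ 0 := by
    rintro h; rw [h, zero_mul] at hpd
    exact (mul_ne_zero (mul_ne_zero hw0 hw1) (pow_ne_zero 2 hξ')) hpd.symm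
  obtain ⟨m, hm⟩ : ∃ m : ℂ, m = d * s ^ 2 / 2 := ⟨_, rfl⟩
  have hYm : Yf κ ρ ξ s z = m ^ 2 := by rw [Yf, hQd, hm]; ring
  have hm0 : m ≠ 0 := by rw [hm]; simp [hd0, hs']
  obtain ⟨S, hS⟩ : ∃ S : ℂ, S = Shh (Yf κ ρ ξ s z) := ⟨_, rfl⟩
  obtain ⟨C, hC⟩ : ∃ C : ℂ, C = Chh (Yf κ ρ ξ s z) := ⟨_, rfl⟩
  obtain ⟨D, hDD⟩ : ∃ D : ℂ, D = Df κ ρ ξ s z := ⟨_, rfl⟩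
  have hD0 : D ≠ 0 := by rintro h; rw [← hDD, h] at hD; simp at hD
  have hDe : D = C + p * s ^ 2 / 2 * S := by
    rw [hDD, Df, ← hS, ← hC, hp, hzw]; ring
  obtain ⟨E, hE⟩ : ∃ E : ℂ, E = Complex.exp (-m) := ⟨_, rfl⟩
  have hE0 : E ≠ 0 := hE ▸ Complex.exp_ne_zero _
  have hEi : Complex.exp m = E⁻¹ := by rw [hE, Complex.exp_neg, inv_inv]
  have hCe : 2 * E * C = 1 + E ^ 2 := by
    rw [hC, hYm, Chh_sq, Complex.cosh, hEi, ← hE]; field_simp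
  have hSe : 2 * E * (m * S) = 1 - E ^ 2 := by
    rw [hS, hYm, Shh_sq, Complex.sinh, hEi, ← hE]; field_simp
  have hE2 : Complex.exp (-d * ((s ^ 2 : ℝ) : ℂ)) = E ^ 2 := by
    rw [hE, ← Complex.exp_nat_mul]; congr 1; rw [hm]; push_cast; ring
  have hγ : hestGamma κ ρ ξ w = (p - d) / (p + d) := by rw [hestGamma, ← hd, ← hp]
  have h1 : 1 - hestGamma κ ρ ξ w = 2 * d / (p + d) := by
    rw [hγ]; field_simp; ring
  have h2 : 1 - hestGamma κ ρ ξ w * E ^ 2 = 2 * E * d * D / (p + d) := by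
    rw [hγ, eq_div_iff hpd0]
    have : (1 - (p - d) / (p + d) * E ^ 2) * (p + d) = (p + d) - (p - d) * E ^ 2 := by
      field_simp
    rw [this, hDe]
    rw [hm] at hSe
    linear_combination -d * hCe - p * hSe
  have hB : hestB κ ρ ξ w (s ^ 2) = Bf κ ρ ξ s z := by
    rw [hestB, ← hd, ← hp, hE2, h2, Bf, ← hS, ← hDD, ← hSe, hm]
    have hpd' : (p - d) = w * (w - 1) * (ξ : ℂ) ^ 2 / (p + d) := by
      rw [eq_div_iff hpd0, ← hpd]; ring
    rw [hpd', hzw]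
    field_simp
  have hlog : Complex.log ((1 - hestGamma κ ρ ξ w * E ^ 2) / (1 - hestGamma κ ρ ξ w)) =
      -m + Complex.log D := by
    have : (1 - hestGamma κ ρ ξ w * E ^ 2) / (1 - hestGamma κ ρ ξ w) =
        Complex.exp (-m + Complex.log D) := by
      rw [h1, h2, Complex.exp_add, Complex.exp_log hD0, ← hE]
      field_simp
    have hm1 : |m.im| < 1 := by
      refine (Complex.abs_im_le_norm m).trans_lt ?_
      rw [hYm, norm_pow] at hY
      nlinarith [norm_nonneg m]
    have ha : |D.arg| < Real.pi / 2 := by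
      rw [Complex.abs_arg_lt_pi_div_two_iff, hDD]
      left; exact hD
    have hpi := Real.pi_gt_three
    rw [abs_lt] at hm1 ha
    rw [this, Complex.log_exp]
    · simp [Complex.log_im]; linarith
    · simp [Complex.log_im]; linarith
  have hA : hestA κ θ ρ ξ w (s ^ 2) = Af κ θ ρ ξ s z := by
    rw [hestA, ← hd, ← hp, hE2, hlog, Af, ← hDD, hm, hp, hzw]
    push_cast; ring
  rw [← hw, hestG, hA, hB, Gf]


/-! ### Uniform bounds -/

/-- the filter `s → 0+`, uniformly in `‖z‖ ≤ R` -/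
def lR (R : ℝ) : Filter (ℝ × ℂ) := 𝓝[>] (0 : ℝ) ×ˢ 𝓟 (Metric.closedBall (0 : ℂ) R)

lemma lR_z (R : ℝ) : (fun p : ℝ × ℂ => p.2) =O[lR R] fun _ => (1 : ℂ) := by
  refine IsBigO.of_bound R ?_
  have : ∀ᶠ z in 𝓟 (Metric.closedBall (0 : ℂ) R), ‖z‖ ≤ R := by
    simp
  filter_upwards [this.prod_inr (𝓝[>] (0 : ℝ))] with p hp
  simpa using hp

lemma lR_s (R : ℝ) : Tendsto (fun p : ℝ × ℂ => (p.1 : ℂ)) (lR R) (𝓝 0) := by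
  have h1 : Tendsto (fun p : ℝ × ℂ => p.1) (lR R) (𝓝 0) :=
    (tendsto_fst).mono_right nhdsWithin_le_nhds
  have := (Complex.continuous_ofReal.tendsto 0).comp h1
  simpa [Function.comp_def] using this

lemma lR_s1 (R : ℝ) : (fun p : ℝ × ℂ => (p.1 : ℂ)) =O[lR R] fun _ => (1 : ℂ) :=
  (lR_s R).isBigO_one ℂ

lemma Qf_O (κ ρ ξ R : ℝ) : (fun p : ℝ × ℂ => Qf κ ρ ξ p.1 p.2) =O[lR R] fun _ => (1 : ℂ) := by
  have hz := lR_z R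
  have hs := lR_s1 R
  have h1 : (fun p : ℝ × ℂ => (κ : ℂ) * p.1 - ρ * ξ * p.2) =O[lR R] fun _ => (1 : ℂ) :=
    (hs.const_mul_left _).sub (hz.const_mul_left _)
  have h2 := (h1.pow 2).add (((hz.mul (hs.sub hz)).mul (isBigO_const_one ℂ ((ξ : ℂ) ^ 2) (lR R))))
  simpa [Qf] using h2

lemma Yf_O (κ ρ ξ R : ℝ) :
    (fun p : ℝ × ℂ => Yf κ ρ ξ p.1 p.2) =O[lR R] fun p => (p.1 : ℂ) := by
  have h := ((isBigO_refl (fun p : ℝ × ℂ => (p.1 : ℂ)) (lR R)).mul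
    ((lR_s1 R).mul (Qf_O κ ρ ξ R))).const_mul_left (1 / 4 : ℂ)
  simp only [mul_one] at h
  refine h.congr_left fun p => ?_
  rw [Yf]; ring

lemma Yf_tendsto (κ ρ ξ R : ℝ) :
    Tendsto (fun p : ℝ × ℂ => Yf κ ρ ξ p.1 p.2) (lR R) (𝓝 0) :=
  (Yf_O κ ρ ξ R).trans_tendsto (lR_s R)

lemma Sh_O (κ ρ ξ R : ℝ) :
    (fun p : ℝ × ℂ => Shh (Yf κ ρ ξ p.1 p.2) - 1) =O[lR R] fun p => (p.1 : ℂ) :=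
  (Shh_O.comp_tendsto (Yf_tendsto κ ρ ξ R)).trans (Yf_O κ ρ ξ R)

lemma Ch_O (κ ρ ξ R : ℝ) :
    (fun p : ℝ × ℂ => Chh (Yf κ ρ ξ p.1 p.2) - 1) =O[lR R] fun p => (p.1 : ℂ) :=
  (Chh_O.comp_tendsto (Yf_tendsto κ ρ ξ R)).trans (Yf_O κ ρ ξ R)

lemma Sh_O1 (κ ρ ξ R : ℝ) :
    (fun p : ℝ × ℂ => Shh (Yf κ ρ ξ p.1 p.2)) =O[lR R] fun _ => (1 : ℂ) := by
  have h := ((Sh_O κ ρ ξ R).trans (lR_s1 R)).add (isBigO_const_one ℂ (1 : ℂ) (lR R))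
  simpa using h

lemma Df_O (κ ρ ξ R : ℝ) :
    (fun p : ℝ × ℂ => Df κ ρ ξ p.1 p.2 - 1) =O[lR R] fun p => (p.1 : ℂ) := by
  have hz := lR_z R
  have hs := lR_s1 R
  have h1 : (fun p : ℝ × ℂ => (κ : ℂ) * p.1 - ρ * ξ * p.2) =O[lR R] fun _ => (1 : ℂ) :=
    (hs.const_mul_left _).sub (hz.const_mul_left _)
  have h2 := (((isBigO_refl (fun p : ℝ × ℂ => (p.1 : ℂ)) (lR R)).mul
    (h1.mul (Sh_O1 κ ρ ξ R))).const_mul_left (1 / 2 : ℂ))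
  simp only [mul_one] at h2
  refine ((Ch_O κ ρ ξ R).add h2).congr_left fun p => ?_
  rw [Df]; ring

lemma Df_tendsto (κ ρ ξ R : ℝ) :
    Tendsto (fun p : ℝ × ℂ => Df κ ρ ξ p.1 p.2) (lR R) (𝓝 1) := by
  have := ((Df_O κ ρ ξ R).trans_tendsto (lR_s R)).add_const 1
  simpa using this

lemma Bf_O (κ ρ ξ R : ℝ) :
    (fun p : ℝ × ℂ => Bf κ ρ ξ p.1 p.2 - p.2 ^ 2 / 2) =O[lR R] fun p => (p.1 : ℂ) := by
  have hz := lR_z R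
  have hs := lR_s1 R
  have hDi : (fun p : ℝ × ℂ => (Df κ ρ ξ p.1 p.2)⁻¹) =O[lR R] fun _ => (1 : ℂ) :=
    ((Df_tendsto κ ρ ξ R).inv₀ one_ne_zero).isBigO_one ℂ
  have hne : ∀ᶠ p in lR R, Df κ ρ ξ p.1 p.2 ≠ 0 :=
    (Df_tendsto κ ρ ξ R).eventually_ne one_ne_zero
  have h1 := (((hz.pow 2).mul hDi).mul ((Sh_O κ ρ ξ R).sub (Df_O κ ρ ξ R))).const_mul_left (1/2 : ℂ)
  have h2 := (((hz.mul (Sh_O1 κ ρ ξ R)).mul hDi).mul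
    (isBigO_refl (fun p : ℝ × ℂ => (p.1 : ℂ)) (lR R))).const_mul_left (1/2 : ℂ)
  have h3 := h1.sub (h2.trans (by simpa using isBigO_refl _ _))
  refine (h3.congr' ?_ (Eventually.of_forall fun p => ?_))
  · filter_upwards [hne] with p hp
    rw [Bf]; field_simp; ring
  · simp

lemma Af_O (κ θ ρ ξ R : ℝ) :
    (fun p : ℝ × ℂ => Af κ θ ρ ξ p.1 p.2) =O[lR R] fun p => (p.1 : ℂ) := by
  have hz := lR_z R
  have hs := lR_s1 R
  have h1 : (fun p : ℝ × ℂ => (κ : ℂ) * p.1 - ρ * ξ * p.2) =O[lR R] fun _ => (1 : ℂ) :=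
    (hs.const_mul_left _).sub (hz.const_mul_left _)
  have h2 := (isBigO_refl (fun p : ℝ × ℂ => (p.1 : ℂ)) (lR R)).mul h1
  have h3 : (fun p : ℝ × ℂ => Complex.log (Df κ ρ ξ p.1 p.2)) =O[lR R] fun p => (p.1 : ℂ) := by
    have h := (Complex.hasStrictDerivAt_log (x := 1) (by simp)).hasDerivAt.differentiableAt.isBigO_sub
    simp only [Complex.log_one, sub_zero] at h
    exact (h.comp_tendsto (Df_tendsto κ ρ ξ R)).trans (Df_O κ ρ ξ R)
  simp only [mul_one] at h2
  exact ((h2.sub (h3.const_mul_left 2)).const_mul_left _).congr_left fun p => by rw [Af]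

lemma lR_ev {R : ℝ} {P : ℝ → ℂ → Prop} (h : ∀ᶠ p in lR R, P p.1 p.2) :
    ∀ᶠ s in 𝓝[>] (0 : ℝ), ∀ z, ‖z‖ ≤ R → P s z := by
  rw [lR, eventually_prod_principal_iff] at h
  filter_upwards [h] with s hs z hz
  exact hs z (by simpa using hz)

lemma unif (κ θ ρ ξ R : ℝ) : ∃ C : ℝ, 0 < C ∧ ∀ᶠ s in 𝓝[>] (0 : ℝ), ∀ z : ℂ, ‖z‖ ≤ R →
    ‖Yf κ ρ ξ s z‖ < 1 ∧ 0 < (Df κ ρ ξ s z).re ∧ ‖Bf κ ρ ξ s z - z ^ 2 / 2‖ ≤ C * s ∧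
    ‖Af κ θ ρ ξ s z‖ ≤ C * s := by
  obtain ⟨C1, hC1, h1⟩ := (Bf_O κ ρ ξ R).exists_pos
  obtain ⟨C2, hC2, h2⟩ := (Af_O κ θ ρ ξ R).exists_pos
  refine ⟨C1 + C2, by positivity, ?_⟩
  have h3 : ∀ᶠ p in lR R, ‖Yf κ ρ ξ p.1 p.2‖ < 1 := by
    have := (Yf_tendsto κ ρ ξ R).norm
    rw [norm_zero] at this
    exact this.eventually_lt_const one_pos
  have h4 : ∀ᶠ p in lR R, 0 < (Df κ ρ ξ p.1 p.2).re := by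
    have := (Complex.continuous_re.tendsto _).comp (Df_tendsto κ ρ ξ R)
    exact this.eventually_const_lt (by simp)
  have := lR_ev (R := R) (P := fun s z => ‖Yf κ ρ ξ s z‖ < 1 ∧ 0 < (Df κ ρ ξ s z).re ∧
    ‖Bf κ ρ ξ s z - z ^ 2 / 2‖ ≤ C1 * ‖(s : ℂ)‖ ∧ ‖Af κ θ ρ ξ s z‖ ≤ C2 * ‖(s : ℂ)‖)
    (by filter_upwards [h1.bound, h2.bound, h3, h4] with p a b c d using ⟨c, d, a, b⟩)
  filter_upwards [this, self_mem_nhdsWithin] with s hs hs0 z hz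
  have hs0 : 0 < s := hs0
  obtain ⟨a, b, c, d⟩ := hs z hz
  rw [Complex.norm_real, Real.norm_of_nonneg hs0.le] at c d
  exact ⟨a, b, by nlinarith, by nlinarith⟩

lemma Yf_diff (κ ρ ξ s : ℝ) : Differentiable ℂ (Yf κ ρ ξ s) := by
  unfold Yf Qf; fun_prop

lemma Df_diff {κ ρ ξ s : ℝ} {z : ℂ} (hY : ‖Yf κ ρ ξ s z‖ < 1) :
    DifferentiableAt ℂ (Df κ ρ ξ s) z := by
  have hmem : Metric.ball (0 : ℂ) 1 ∈ 𝓝 (Yf κ ρ ξ s z) :=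
    Metric.isOpen_ball.mem_nhds (by simpa using hY)
  have hC : DifferentiableAt ℂ (fun z => Chh (Yf κ ρ ξ s z)) z :=
    (Chh_diff.differentiableAt hmem).comp z (Yf_diff κ ρ ξ s z)
  have hS : DifferentiableAt ℂ (fun z => Shh (Yf κ ρ ξ s z)) z :=
    (Shh_diff.differentiableAt hmem).comp z (Yf_diff κ ρ ξ s z)
  unfold Df
  fun_prop

lemma Bf_diff {κ ρ ξ s : ℝ} {z : ℂ} (hY : ‖Yf κ ρ ξ s z‖ < 1) (hD : 0 < (Df κ ρ ξ s z).re) :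
    DifferentiableAt ℂ (Bf κ ρ ξ s) z := by
  have hmem : Metric.ball (0 : ℂ) 1 ∈ 𝓝 (Yf κ ρ ξ s z) :=
    Metric.isOpen_ball.mem_nhds (by simpa using hY)
  have hS : DifferentiableAt ℂ (fun z => Shh (Yf κ ρ ξ s z)) z :=
    (Shh_diff.differentiableAt hmem).comp z (Yf_diff κ ρ ξ s z)
  have hD0 : Df κ ρ ξ s z ≠ 0 := by rintro h; rw [h] at hD; simp at hD
  have := Df_diff hY
  unfold Bf
  exact DifferentiableAt.mul (by fun_prop) (hS.div this hD0)

lemma Af_diff {κ θ ρ ξ s : ℝ} {z : ℂ} (hY : ‖Yf κ ρ ξ s z‖ < 1) (hD : 0 < (Df κ ρ ξ s z).re) :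
    DifferentiableAt ℂ (Af κ θ ρ ξ s) z := by
  have h1 := (Df_diff hY).clog (Complex.mem_slitPlane_iff.mpr (Or.inl hD))
  unfold Af
  fun_prop

lemma real_parts (κ θ ρ ξ s : ℝ) (u : ℝ) (hD : 0 < (Df κ ρ ξ s u).re) :
    (∃ b : ℝ, Bf κ ρ ξ s u = b) ∧ ∃ a : ℝ, Af κ θ ρ ξ s u = a := by
  have hY : Yf κ ρ ξ s u = ((s ^ 2 * ((κ * s - ρ * ξ * u) ^ 2 + u * (s - u) * ξ ^ 2) / 4 : ℝ) : ℂ) := by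
    rw [Yf, Qf]; push_cast; ring
  obtain ⟨c, hc⟩ := Chh_real (s ^ 2 * ((κ * s - ρ * ξ * u) ^ 2 + u * (s - u) * ξ ^ 2) / 4)
  obtain ⟨q, hq⟩ := Shh_real (s ^ 2 * ((κ * s - ρ * ξ * u) ^ 2 + u * (s - u) * ξ ^ 2) / 4)
  have hDr : Df κ ρ ξ s u = ((c + s * (κ * s - ρ * ξ * u) / 2 * q : ℝ) : ℂ) := by
    rw [Df, hY, hc, hq]; push_cast; ring
  constructor
  · refine ⟨u * (u - s) / 2 * (q / (c + s * (κ * s - ρ * ξ * u) / 2 * q)), ?_⟩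
    rw [Bf, hDr, hY, hq]; push_cast; ring
  · rw [hDr, Complex.ofReal_re] at hD
    refine ⟨κ * θ / ξ ^ 2 * (s * (κ * s - ρ * ξ * u) -
      2 * Real.log (c + s * (κ * s - ρ * ξ * u) / 2 * q)), ?_⟩
    rw [Af, hDr, ← Complex.ofReal_log hD.le]; push_cast; ring

/-- Cauchy estimates on the derivatives -/
lemma unif_deriv (κ θ ρ ξ R : ℝ) : ∃ C : ℝ, 0 < C ∧ ∀ᶠ s in 𝓝[>] (0 : ℝ), ∀ z : ℂ, ‖z‖ ≤ R →
    ‖deriv (Bf κ ρ ξ s) z - z‖ ≤ C * s ∧ ‖deriv (Af κ θ ρ ξ s) z‖ ≤ C * s := by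
  obtain ⟨C, hC, h⟩ := unif κ θ ρ ξ (R + 1)
  refine ⟨C, hC, ?_⟩
  filter_upwards [h] with s hs z hz
  have hn : ∀ y ∈ Metric.closedBall z 1, ‖y‖ ≤ R + 1 := by
    intro y hy
    have : ‖y - z‖ ≤ 1 := by simpa [dist_eq_norm] using hy
    calc ‖y‖ = ‖z + (y - z)‖ := by congr 1; ring
      _ ≤ R + 1 := (norm_add_le _ _).trans (add_le_add hz this)
  have hBd : ∀ y ∈ Metric.closedBall z 1, DifferentiableAt ℂ (Bf κ ρ ξ s) y := fun y hy =>
    Bf_diff (hs y (hn y hy)).1 (hs y (hn y hy)).2.1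
  have hAd : ∀ y ∈ Metric.closedBall z 1, DifferentiableAt ℂ (Af κ θ ρ ξ s) y := fun y hy =>
    Af_diff (hs y (hn y hy)).1 (hs y (hn y hy)).2.1
  have hcl : closure (Metric.ball z 1) = Metric.closedBall z 1 := closure_ball z one_ne_zero
  constructor
  · have h1 : deriv (Bf κ ρ ξ s) z - z = deriv (fun y => Bf κ ρ ξ s y - y ^ 2 / 2) z := by
      have hb := (hBd z (by simp)).hasDerivAt
      have h2 := hb.sub (((hasDerivAt_id z).pow 2).div_const 2)
      have := h2.deriv
      simp only [id] at this
      refine Eq.trans ?_ this.symm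
      simp
    rw [h1]
    have := Complex.norm_deriv_le_of_forall_mem_sphere_norm_le (c := z) (R := 1) (C := C * s)
      (f := fun y => Bf κ ρ ξ s y - y ^ 2 / 2) one_pos ?_ ?_
    · simpa using this
    · apply DifferentiableOn.diffContOnCl
      rw [hcl]
      intro y hy
      exact ((hBd y hy).sub (by fun_prop)).differentiableWithinAt
    · intro y hy
      exact (hs y (hn y (Metric.sphere_subset_closedBall hy))).2.2.1
  · have := Complex.norm_deriv_le_of_forall_mem_sphere_norm_le (c := z) (R := 1) (C := C * s)
      (f := Af κ θ ρ ξ s) one_pos ?_ ?_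
    · simpa using this
    · apply DifferentiableOn.diffContOnCl
      rw [hcl]
      intro y hy
      exact (hAd y hy).differentiableWithinAt
    · intro y hy
      exact (hs y (hn y (Metric.sphere_subset_closedBall hy))).2.2.2


/-! ### Second-order expansions in a small variable -/

def Ex (l : Filter ℝ) (X f : ℝ → ℂ) (a b c : ℂ) : Prop :=
  (fun t => f t - (a + b * X t + c * X t ^ 2)) =O[l] fun t => X t ^ 3

section ExCalc
variable {l : Filter ℝ} {X f g : ℝ → ℂ} {a b c a' b' c' : ℂ}

lemma X_one (hX : Tendsto X l (𝓝 0)) : X =O[l] fun _ => (1 : ℂ) := hX.isBigO_one ℂ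

lemma X_pow (hX : Tendsto X l (𝓝 0)) {m n : ℕ} (h : n ≤ m) :
    (fun t => X t ^ m) =O[l] fun t => X t ^ n := by
  obtain ⟨r, rfl⟩ := Nat.exists_eq_add_of_le h
  have := (isBigO_refl (fun t => X t ^ n) l).mul ((X_one hX).pow r)
  refine (this.congr_left fun t => ?_).congr_right fun t => ?_
  · rw [pow_add]
  · simp

lemma Ex.poly_O (hX : Tendsto X l (𝓝 0)) (a b c : ℂ) :
    (fun t => a + b * X t + c * X t ^ 2) =O[l] fun _ => (1 : ℂ) := by
  have h := ((tendsto_const_nhds (x := a)).add (hX.const_mul b)).add ((hX.pow 2).const_mul c)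
  exact h.isBigO_one ℂ

lemma Ex.tendsto (hX : Tendsto X l (𝓝 0)) (h : Ex l X f a b c) : Tendsto f l (𝓝 a) := by
  have h1 : Tendsto (fun t => f t - (a + b * X t + c * X t ^ 2)) l (𝓝 0) := by
    have := hX.pow 3
    simp only [ne_eq, OfNat.ofNat_ne_zero, not_false_eq_true, zero_pow] at this
    exact h.trans_tendsto this
  have h2 := ((tendsto_const_nhds (x := a)).add (hX.const_mul b)).add ((hX.pow 2).const_mul c)
  have h3 := h1.add h2
  simpa using h3

lemma Ex.bdd (hX : Tendsto X l (𝓝 0)) (h : Ex l X f a b c) : f =O[l] fun _ => (1 : ℂ) :=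
  (h.tendsto hX).isBigO_one ℂ

lemma Ex.congr (h : Ex l X f a b c) (hf : f =ᶠ[l] g) (ha : a = a') (hb : b = b') (hc : c = c') :
    Ex l X g a' b' c' := by
  subst ha hb hc
  refine IsBigO.congr' h ?_ (EventuallyEq.refl _ _)
  filter_upwards [hf] with t ht
  rw [ht]

lemma Ex.add (h : Ex l X f a b c) (h' : Ex l X g a' b' c') :
    Ex l X (fun t => f t + g t) (a + a') (b + b') (c + c') := by
  refine (IsBigO.add h h').congr_left fun t => ?_
  ring

lemma Ex.const (r : ℂ) : Ex l X (fun _ => r) r 0 0 := by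
  unfold Ex
  simpa using isBigO_zero _ _

lemma Ex.small (h : f =O[l] fun t => X t ^ 3) : Ex l X f 0 0 0 := by
  unfold Ex
  simpa using h

lemma Ex.const_mul (r : ℂ) (h : Ex l X f a b c) :
    Ex l X (fun t => r * f t) (r * a) (r * b) (r * c) := by
  refine (IsBigO.const_mul_left h r).congr_left fun t => ?_
  ring

lemma Ex.mul (hX : Tendsto X l (𝓝 0)) (h : Ex l X f a b c) (h' : Ex l X g a' b' c') :
    Ex l X (fun t => f t * g t) (a * a') (a * b' + b * a') (a * c' + b * b' + c * a') := by
  have h1 := IsBigO.mul h (h'.bdd hX)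
  have h2 := IsBigO.mul (Ex.poly_O hX a b c) h'
  have h3 := IsBigO.mul (isBigO_refl (fun t => X t ^ 3) l)
    (Ex.poly_O hX (b * c' + c * b') (c * c') 0)
  simp only [mul_one, one_mul] at h1 h2 h3
  refine ((h1.add h2).add h3).congr_left fun t => ?_
  ring

lemma Ex.shift (hX : Tendsto X l (𝓝 0)) (h : Ex l X f a b c) :
    Ex l X (fun t => X t * f t) 0 a b := by
  have hx : Ex l X X 0 1 0 := by
    unfold Ex
    simpa using isBigO_zero _ _
  exact (hx.mul hX h).congr (EventuallyEq.refl _ _) (by ring) (by ring) (by ring)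

lemma Ex.inv (hX : Tendsto X l (𝓝 0)) (h : Ex l X f a b c) (ha : a ≠ 0) :
    Ex l X (fun t => (f t)⁻¹) a⁻¹ (-b / a ^ 2) (b ^ 2 / a ^ 3 - c / a ^ 2) := by
  have hp : Ex l X (fun t => a⁻¹ + (-b / a ^ 2) * X t + (b ^ 2 / a ^ 3 - c / a ^ 2) * X t ^ 2)
      a⁻¹ (-b / a ^ 2) (b ^ 2 / a ^ 3 - c / a ^ 2) := by
    unfold Ex
    simpa using isBigO_zero _ _
  have h1 : Ex l X (fun t => 1 - f t * (a⁻¹ + (-b / a ^ 2) * X t +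
      (b ^ 2 / a ^ 3 - c / a ^ 2) * X t ^ 2)) 0 0 0 :=
    ((Ex.const (l := l) (X := X) 1).add ((h.mul hX hp).const_mul (-1))).congr
      (Eventually.of_forall fun t => by ring) (by field_simp; ring) (by field_simp; ring)
      (by field_simp; ring)
  have h2 : (fun t => (f t)⁻¹) =O[l] fun _ => (1 : ℂ) :=
    ((h.tendsto hX).inv₀ ha).isBigO_one ℂ
  have h3 := h2.mul h1
  have hne := (h.tendsto hX).eventually_ne ha
  refine (h3.congr' ?_ (Eventually.of_forall fun t => by simp))
  filter_upwards [hne] with t ht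
  field_simp
  ring

lemma Ex.exp (hX : Tendsto X l (𝓝 0)) (h : Ex l X f a b c) :
    Ex l X (fun t => Complex.exp (f t)) (Complex.exp a) (Complex.exp a * b)
      (Complex.exp a * (c + b ^ 2 / 2)) := by
  have hy : Ex l X (fun t => f t - a) 0 b c :=
    (h.add (Ex.const (-a))).congr (Eventually.of_forall fun t => by ring) (by ring) (by ring)
      (by ring)
  have hy0 := hy.tendsto hX
  have hyX : (fun t => f t - a) =O[l] X := by
    have h1 : (fun t => b * X t + c * X t ^ 2) =O[l] X := by
      have := (X_pow hX (show 1 ≤ 2 by norm_num)).const_mul_left c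
      simp only [pow_one] at this
      exact ((isBigO_refl X l).const_mul_left b).add this
    have h2 := (IsBigO.trans hy (X_pow hX (show 1 ≤ 3 by norm_num)))
    simp only [pow_one] at h2
    refine (h2.add h1).congr_left fun t => ?_
    ring
  have h3 : (fun t => Complex.exp (f t - a) - (1 + (f t - a) + (f t - a) ^ 2 / 2)) =O[l]
      fun t => X t ^ 3 := by
    have := ((Complex.exp_sub_sum_range_isBigO_pow 3).comp_tendsto hy0).trans (hyX.pow 3)
    refine this.congr_left fun t => ?_
    simp [Finset.sum_range_succ, Nat.factorial]
  have h4 := (((Ex.small h3).add (Ex.const 1)).add hy).add ((hy.mul hX hy).const_mul (1 / 2))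
  refine (h4.const_mul (Complex.exp a)).congr (Eventually.of_forall fun t => ?_) (by ring)
    (by ring) (by ring)
  have : Complex.exp (f t) = Complex.exp a * Complex.exp (f t - a) := by
    rw [← Complex.exp_add]; congr 1; ring
  beta_reduce
  rw [this]; ring

lemma Ex.log (hX : Tendsto X l (𝓝 0)) (h : Ex l X f a b c) :
    Ex l X (fun t => Complex.log (1 - X t * f t) + X t * f t) 0 0 (-a ^ 2 / 2) := by
  have hy := h.shift hX
  have hn : Tendsto (fun t => -(X t * f t)) l (𝓝 0) := by simpa using (hy.tendsto hX).neg
  have h1 := (Complex.log_sub_logTaylor_isBigO 2).comp_tendsto hn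
  have h2 : (fun t => (-(X t * f t)) ^ 3) =O[l] fun t => X t ^ 3 := by
    have := ((isBigO_refl X l).mul (h.bdd hX)).pow 3
    simp only [mul_one] at this
    refine IsBigO.congr_left this.neg_left fun t => ?_
    ring
  have h3 := h1.trans h2
  have h4 := (Ex.small h3).add ((hy.mul hX hy).const_mul (-1 / 2))
  refine h4.congr (Eventually.of_forall fun t => ?_) (by ring) (by ring) (by ring)
  simp [Complex.logTaylor_succ, Complex.logTaylor_zero]
  ring

end ExCalc


/-! ### Expansion of the saddle point -/

lemma saddle_exp (l : Filter ℝ) (x us e b1 a1 : ℝ → ℝ) (β V k α a0 e0 : ℝ)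
    (hβ : 0 < β) (hV : 0 < V) (hk : k ≠ 0) (ha0 : β * a0 ^ 2 = 1) (hak : 0 < a0 * k)
    (he0 : 0 < e0) (hke : k * e0 ^ 2 = V * a0)
    (hx : Tendsto x l (𝓝 0)) (hxpos : ∀ᶠ t in l, 0 < x t)
    (hus : us =O[l] fun _ => (1 : ℝ))
    (he : (fun t => e t - (1 - β * us t ^ 2)) =O[l] fun t => x t ^ 4)
    (hb : (fun t => b1 t - us t) =O[l] fun t => x t ^ 4)
    (ha : a1 =O[l] fun t => x t ^ 4)
    (hepos : ∀ᶠ t in l, 0 < e t)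
    (hsad : ∀ᶠ t in l, x t ^ 4 * (a1 t + V * b1 t / e t ^ 2 + 2 * α * β * b1 t / e t) = k) :
    ((fun t => us t - (a0 - a0 * e0 / 2 * x t ^ 2)) =O[l] fun t => x t ^ 4) ∧
    ((fun t => e t / x t ^ 2 - (e0 + a0 * (2 * α * β - V / 2) / (2 * k) * x t ^ 2)) =O[l]
      fun t => x t ^ 4) := by
  have hx1 : x =O[l] fun _ => (1 : ℝ) := hx.isBigO_one ℝ
  have hxp : ∀ n : ℕ, (fun t => x t ^ n) =O[l] fun _ => (1 : ℝ) := fun n => by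
    simpa using hx1.pow n
  have hx42 : (fun t => x t ^ 4) =O[l] fun t => x t ^ 2 := by
    have := (isBigO_refl (fun t => x t ^ 2) l).mul (hxp 2)
    simp only [mul_one] at this
    exact this.congr_left fun t => by ring
  have ha0' : a0 ≠ 0 := by rintro rfl; simp at ha0
  have hus2 : (fun t => us t ^ 2) =O[l] fun _ => (1 : ℝ) := by simpa using hus.pow 2
  have he1 : e =O[l] fun _ => (1 : ℝ) := by
    have := (he.trans (hxp 4)).add ((isBigO_const_one ℝ (1 : ℝ) l).sub (hus2.const_mul_left β))
    exact this.congr_left fun t => by ring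
  have hb1 : b1 =O[l] fun _ => (1 : ℝ) := by
    have := (hb.trans (hxp 4)).add hus
    exact this.congr_left fun t => by ring
  -- the rescaled equation
  have heq : ∀ᶠ t in l, k * (e t / x t ^ 2) ^ 2 =
      a1 t * e t ^ 2 + V * b1 t + 2 * α * β * b1 t * e t := by
    filter_upwards [hsad, hepos, hxpos] with t h1 h2 h3
    rw [← h1]; field_simp
  have hε : (fun t => e t / x t ^ 2) =O[l] fun _ => (1 : ℝ) := by
    have h1 : (fun t => a1 t * e t ^ 2 + V * b1 t + 2 * α * β * b1 t * e t) =O[l]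
        fun _ => (1 : ℝ) := by
      have j1 : (fun t => a1 t * e t ^ 2) =O[l] fun _ => (1 : ℝ) := by
        simpa using (ha.trans (hxp 4)).mul (he1.pow 2)
      have j2 : (fun t => 2 * α * β * b1 t * e t) =O[l] fun _ => (1 : ℝ) := by
        simpa using (hb1.const_mul_left (2 * α * β)).mul he1
      exact (j1.add (hb1.const_mul_left V)).add j2
    have h3 : ((fun t => e t / x t ^ 2) ^ 2) =O[l] ((fun _ => (1 : ℝ)) ^ 2) := by
      have := h1.const_mul_left k⁻¹
      have h4 : (fun t => (e t / x t ^ 2) ^ 2) =O[l] fun _ => (1 : ℝ) := by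
        refine this.congr' ?_ (EventuallyEq.refl _ _)
        filter_upwards [heq] with t ht
        rw [← ht]; field_simp
      simpa [Pi.pow_def] using h4
    exact IsBigO.of_pow two_ne_zero h3
  have hee : ∀ᶠ t in l, e t = x t ^ 2 * (e t / x t ^ 2) := by
    filter_upwards [hxpos] with t h3
    field_simp
  have he2 : e =O[l] fun t => x t ^ 2 := by
    have := (isBigO_refl (fun t => x t ^ 2) l).mul hε
    simp only [mul_one] at this
    refine this.congr' ?_ (EventuallyEq.refl _ _)
    filter_upwards [hee] with t ht using ht.symm
  have hβa : β⁻¹ = a0 ^ 2 := by field_simp; linarith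
  have hsq4 : (fun t => us t ^ 2 - a0 ^ 2 + a0 ^ 2 * e t) =O[l] fun t => x t ^ 4 := by
    refine (he.const_mul_left (a0 ^ 2)).congr_left fun t => ?_
    linear_combination (us t ^ 2 ) * ha0
  have hsq : (fun t => us t ^ 2 - a0 ^ 2) =O[l] fun t => x t ^ 2 := by
    refine ((hsq4.trans hx42).sub (he2.const_mul_left (a0 ^ 2))).congr_left fun t => ?_
    ring
  have hx20 : Tendsto (fun t => x t ^ 2) l (𝓝 0) := by simpa using hx.pow 2
  have hx40 : Tendsto (fun t => x t ^ 4) l (𝓝 0) := by simpa using hx.pow 4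
  have he20 : Tendsto e l (𝓝 0) := he2.trans_tendsto hx20
  -- sign of the saddle point
  have hlim : Tendsto (fun t => a0 * (k * (e t / x t ^ 2) ^ 2 - V * us t)) l (𝓝 0) := by
    have h1 : (fun t => a1 t * e t ^ 2 + V * (b1 t - us t) + 2 * α * β * b1 t * e t) =O[l]
        fun t => x t ^ 2 := by
      have i1 : (fun t => a1 t * e t ^ 2) =O[l] fun t => x t ^ 4 := by
        simpa using ha.mul (he1.pow 2)
      have i2 : (fun t => 2 * α * β * b1 t * e t) =O[l] fun t => x t ^ 2 := by
        simpa using (hb1.const_mul_left (2 * α * β)).mul he2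
      exact ((i1.trans hx42).add ((hb.trans hx42).const_mul_left V)).add i2
    have h2 := (h1.trans_tendsto hx20).const_mul a0
    rw [mul_zero] at h2
    refine h2.congr' ?_
    filter_upwards [heq] with t ht
    rw [ht]; ring
  have hsgn : ∀ᶠ t in l, a0 ^ 2 / 2 < a0 * (us t + a0) := by
    have hpos : 0 < V * a0 ^ 2 / 2 := by positivity
    filter_upwards [hlim.eventually_lt_const hpos] with t ht
    have h2 : 0 ≤ (a0 * k) * (e t / x t ^ 2) ^ 2 := by positivity
    have h3 : V * (a0 * (us t + a0) - a0 ^ 2 / 2) > 0 := by nlinarith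
    have := (pos_iff_pos_of_mul_pos h3).mp hV
    linarith
  have hinv : (fun t => (us t + a0)⁻¹) =O[l] fun _ => (1 : ℝ) := by
    refine IsBigO.of_bound (2 / |a0|) ?_
    filter_upwards [hsgn] with t ht
    have ha : 0 < |a0| := abs_pos.mpr ha0'
    have h1 : |a0| / 2 ≤ |us t + a0| := by
      have : a0 * (us t + a0) ≤ |a0| * |us t + a0| := by rw [← abs_mul]; exact le_abs_self _
      rw [← sq_abs] at ht
      by_contra hcon
      push Not at hcon
      nlinarith
    rw [norm_inv, Real.norm_eq_abs, norm_one, mul_one, inv_le_comm₀ (by linarith) (by positivity)]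
    rw [inv_div]; exact h1
  have hu2 : (fun t => us t - a0) =O[l] fun t => x t ^ 2 := by
    have := hsq.mul hinv
    simp only [mul_one] at this
    refine this.congr' ?_ (EventuallyEq.refl _ _)
    filter_upwards [hsgn] with t ht
    have : us t + a0 ≠ 0 := by
      intro h; rw [h, mul_zero] at ht; nlinarith [sq_nonneg a0]
    field_simp
    ring
  have hu22 : (fun t => (us t - a0) ^ 2) =O[l] fun t => x t ^ 4 :=
    (hu2.pow 2).congr_right fun t => by ring
  have hu4 : (fun t => us t - a0 + a0 * e t / 2) =O[l] fun t => x t ^ 4 := by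
    refine ((hsq4.sub hu22).const_mul_left (1 / (2 * a0))).congr_left fun t => ?_
    field_simp
    ring
  have hmain : (fun t => k * (e t / x t ^ 2) ^ 2 - V * a0 -
      (2 * α * β * a0 - V * a0 / 2) * e t) =O[l] fun t => x t ^ 4 := by
    have i1 : (fun t => a1 t * e t ^ 2) =O[l] fun t => x t ^ 4 := by
      simpa using ha.mul (he1.pow 2)
    have i2 : (fun t => (b1 t - a0) * e t) =O[l] fun t => x t ^ 4 := by
      have : (fun t => b1 t - a0) =O[l] fun t => x t ^ 2 :=
        ((hb.trans hx42).add hu2).congr_left fun t => by ring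
      exact (this.mul he2).congr_right fun t => by ring
    have i3 := ((i1.add (hb.const_mul_left V)).add (hu4.const_mul_left V)).add
      (i2.const_mul_left (2 * α * β))
    refine i3.congr' ?_ (EventuallyEq.refl _ _)
    filter_upwards [heq] with t ht
    rw [ht]; ring
  obtain ⟨c, hc⟩ : ∃ c : ℝ, c = 2 * α * β * a0 - V * a0 / 2 := ⟨_, rfl⟩
  rw [← hc] at hmain
  have hd4 : (fun t => (e t / x t ^ 2) ^ 2 - e0 ^ 2 - k⁻¹ * c * e t) =O[l] fun t => x t ^ 4 := by
    refine (hmain.const_mul_left k⁻¹).congr_left fun t => ?_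
    rw [← hke]; field_simp
  have hd2 : (fun t => (e t / x t ^ 2) ^ 2 - e0 ^ 2) =O[l] fun t => x t ^ 2 :=
    ((hd4.trans hx42).add (he2.const_mul_left (k⁻¹ * c))).congr_left fun t => by ring
  have hinv2 : (fun t => (e t / x t ^ 2 + e0)⁻¹) =O[l] fun _ => (1 : ℝ) := by
    refine IsBigO.of_bound (1 / e0) ?_
    filter_upwards [hepos, hxpos] with t h1 h2
    have : 0 < e t / x t ^ 2 := by positivity
    rw [norm_inv, Real.norm_of_nonneg (by linarith), norm_one, mul_one, one_div]
    gcongr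
    linarith
  have hf2 : (fun t => e t / x t ^ 2 - e0) =O[l] fun t => x t ^ 2 := by
    have := hd2.mul hinv2
    simp only [mul_one] at this
    refine this.congr' ?_ (EventuallyEq.refl _ _)
    filter_upwards [hepos, hxpos] with t h1 h2
    have h3 : 0 < e t / x t ^ 2 := by positivity
    have : e t / x t ^ 2 + e0 ≠ 0 := by linarith
    rw [← div_eq_mul_inv, div_eq_iff this]
    ring
  have hf22 : (fun t => (e t / x t ^ 2 - e0) ^ 2) =O[l] fun t => x t ^ 4 :=
    (hf2.pow 2).congr_right fun t => by ring
  have he4 : (fun t => e t - e0 * x t ^ 2) =O[l] fun t => x t ^ 4 := by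
    have := (isBigO_refl (fun t => x t ^ 2) l).mul hf2
    refine (this.congr' ?_ (Eventually.of_forall fun t => ?_))
    · filter_upwards [hxpos] with t h3
      field_simp
    · simp only; ring
  constructor
  · refine (hu4.sub (he4.const_mul_left (a0 / 2))).congr_left fun t => ?_
    ring
  · have := ((hd4.sub hf22).add (he4.const_mul_left (k⁻¹ * c))).const_mul_left (1 / (2 * e0))
    refine this.congr_left fun t => ?_
    rw [hc]; field_simp
    ring

/-- expansion of the exponential -/
lemma exponent_exp (l : Filter ℝ) (X ε b1 σ Ac : ℝ → ℂ) (hX : Tendsto X l (𝓝 0))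
    (β V α a0 e0 e1 u : ℂ) (hβ : β ≠ 0) (ha0 : β * a0 ^ 2 = 1) (he0 : e0 ≠ 0)
    (hε : Ex l X ε e0 0 e1) (hb : Ex l X b1 a0 0 (-(a0 * e0 / 2)))
    (hσ : (fun t => σ t + u ^ 2 / 2) =O[l] X) (hA : Ac =O[l] fun t => X t ^ 3)
    (Q : ℝ → ℂ)
    (hQ : ∀ t, Q t = 2 * β * ((Complex.I * u * b1 t + X t ^ 3 * σ t) * (ε t)⁻¹)) :
    Ex l X (fun t => Complex.exp (Ac t + V / (2 * β) * ((ε t)⁻¹ * (Q t * Q t * (1 - X t * Q t)⁻¹)) +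
        V * (X t ^ 2 * σ t * ((ε t)⁻¹ * (ε t)⁻¹)) - α * (Complex.log (1 - X t * Q t) + X t * Q t) +
        2 * α * β * (X t ^ 4 * σ t * (ε t)⁻¹)))
      (Complex.exp (-2 * V * u ^ 2 / e0 ^ 3))
      (Complex.exp (-2 * V * u ^ 2 / e0 ^ 3) * (-4 * Complex.I * u ^ 3 * V * β * a0 / e0 ^ 4))
      (Complex.exp (-2 * V * u ^ 2 / e0 ^ 3) * (u ^ 2 * (V * (3 * e0 ^ 2 + 12 * e1) / (2 * e0 ^ 4) -
        2 * α * β / e0 ^ 2) + u ^ 4 * (8 * V * β / e0 ^ 5) +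
        (-4 * Complex.I * u ^ 3 * V * β * a0 / e0 ^ 4) ^ 2 / 2)) := by
  have hεi := hε.inv hX he0
  have hσ1 : σ =O[l] fun _ => (1 : ℂ) := by
    have := (hσ.trans (X_one hX)).sub (isBigO_const_one ℂ (u ^ 2 / 2) l)
    exact this.congr_left fun t => by ring
  have hσ3 : (fun t => X t ^ 3 * σ t) =O[l] fun t => X t ^ 3 := by
    simpa using (isBigO_refl (fun t => X t ^ 3) l).mul hσ1
  have hQE : Ex l X Q (Complex.I * u * (2 * β * a0 / e0)) 0
      (-(Complex.I * u * (2 * β * a0) * (1 / 2 + e1 / e0 ^ 2))) :=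
    (((((hb.const_mul (Complex.I * u)).add (Ex.small hσ3)).mul hX hεi).const_mul (2 * β))).congr
      (Eventually.of_forall fun t => (hQ t).symm) (by field_simp; ring) (by field_simp; ring)
      (by field_simp; ring)
  have h1 : Ex l X (fun t => (1 - X t * Q t)⁻¹) _ _ _ :=
    (((Ex.const 1).add ((hQE.shift hX).const_mul (-1))).congr
      (Eventually.of_forall fun t => (by ring : _ = 1 - X t * Q t)) rfl rfl rfl).inv hX (by simp)
  have h2 := (hεi.mul hX ((hQE.mul hX hQE).mul hX h1)).const_mul (V / (2 * β))
  have h3 : Ex l X (fun t => X t ^ 2 * σ t) 0 0 (-(u ^ 2 / 2)) := by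
    have := (isBigO_refl (fun t => X t ^ 2) l).mul hσ
    refine (this.congr_left fun t => ?_).congr_right fun t => ?_
    · ring
    · ring
  have h4 := (h3.mul hX (hεi.mul hX hεi)).const_mul V
  have h5 := (hQE.log hX).const_mul (-α)
  have h6 : Ex l X (fun t => X t ^ 4 * σ t) 0 0 0 := by
    apply Ex.small
    have := (X_pow hX (show 3 ≤ 4 by norm_num)).mul hσ1
    simpa using this
  have h7 := (h6.mul hX hεi).const_mul (2 * α * β)
  have h8 := ((((Ex.small hA).add h2).add h4).add h5).add h7
  have ha2 : a0 ^ 2 = 1 / β := by field_simp; linear_combination ha0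
  have hI : Complex.I ^ 2 = -1 := Complex.I_sq
  have hI3 : Complex.I ^ 3 = -Complex.I := Complex.I_pow_three
  have hI4 : Complex.I ^ 4 = 1 := Complex.I_pow_four
  have ha4 : a0 ^ 4 = 1 / β ^ 2 := by
    rw [show a0 ^ 4 = (a0 ^ 2) ^ 2 by ring, ha2]; field_simp
  have ha3 : a0 ^ 3 = a0 / β := by
    rw [show a0 ^ 3 = (a0 ^ 2) * a0 by ring, ha2]; field_simp
  have h9 : Ex l X (fun t => Ac t + V / (2 * β) * ((ε t)⁻¹ * (Q t * Q t * (1 - X t * Q t)⁻¹)) +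
        V * (X t ^ 2 * σ t * ((ε t)⁻¹ * (ε t)⁻¹)) - α * (Complex.log (1 - X t * Q t) + X t * Q t) +
        2 * α * β * (X t ^ 4 * σ t * (ε t)⁻¹)) (-2 * V * u ^ 2 / e0 ^ 3)
        (-4 * Complex.I * u ^ 3 * V * β * a0 / e0 ^ 4)
        (u ^ 2 * (V * (3 * e0 ^ 2 + 12 * e1) / (2 * e0 ^ 4) -
        2 * α * β / e0 ^ 2) + u ^ 4 * (8 * V * β / e0 ^ 5)) := by
    refine h8.congr (Eventually.of_forall fun t => by ring) ?_ ?_ ?_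
    · ring_nf
      simp only [hI, ha2]
      field_simp
      try ring
    · ring_nf
      simp only [hI3, ha3]
      field_simp
      try ring
    · ring_nf
      simp only [hI, hI4, ha2, ha4]
      field_simp
      try ring
  exact h9.exp hX


/-! ### Local analysis at the saddle point -/

lemma betaT_pos {κ ξ t : ℝ} (hκ : 0 < κ) (hξ : 0 < ξ) (ht : 0 < t) : 0 < betaT κ ξ t := by
  unfold betaT
  have : Real.exp (-(κ * t)) < 1 := by
    rw [Real.exp_lt_one_iff]; have := mul_pos hκ ht; linarith
  have h : 0 < 1 - Real.exp (-(κ * t)) := by linarith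
  positivity

lemma fin_quad (a b c : ℝ) (ha : a ≠ 0) : {u : ℝ | a * u ^ 2 + b * u + c = 0}.Finite := by
  by_cases h : ∃ r, a * r ^ 2 + b * r + c = 0
  · obtain ⟨r, hr⟩ := h
    refine (Set.toFinite {r, -b / a - r}).subset ?_
    intro y hy
    have hy : a * y ^ 2 + b * y + c = 0 := hy
    have h1 : (y - r) * (a * (y + r) + b) = 0 := by linear_combination hy - hr
    rcases mul_eq_zero.mp h1 with h2 | h2
    · left; linarith
    · right
      simp only [Set.mem_singleton_iff]
      field_simp
      linarith
  · push Not at h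
    convert Set.finite_empty
    ext y; simp [h y]

lemma fin_ev {S : Set ℝ} (hS : S.Finite) (u0 : ℝ) : ∀ᶠ u in 𝓝[≠] u0, u ∉ S := by
  have h := (hS.subset (Set.sdiff_subset (t := {u0}))).isClosed.isOpen_compl.mem_nhds
    (show u0 ∈ (S \ {u0})ᶜ by simp)
  filter_upwards [mem_nhdsWithin_of_mem_nhds h, self_mem_nhdsWithin] with u hu hu0 hS
  exact hu ⟨hS, hu0⟩

lemma Qf_real (κ ρ ξ s u : ℝ) : Qf κ ρ ξ s u = (((-(1 - ρ ^ 2) * ξ ^ 2) * u ^ 2 +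
    (s * ξ ^ 2 - 2 * κ * s * ρ * ξ) * u + κ ^ 2 * s ^ 2 : ℝ) : ℂ) := by
  rw [Qf]; push_cast; ring

lemma Qf_ev (κ ρ ξ s : ℝ) (hξ : 0 < ξ) (hρ : ρ ∈ Set.Ioo (-1 : ℝ) 1) (u0 : ℝ) :
    ∀ᶠ u : ℝ in 𝓝[≠] u0, (u : ℂ) ≠ 0 ∧ (u : ℂ) ≠ s ∧ Qf κ ρ ξ s u ≠ 0 := by
  have hρ2 : 0 < 1 - ρ ^ 2 := by nlinarith [hρ.1, hρ.2]
  have h1 := fin_quad (-(1 - ρ ^ 2) * ξ ^ 2) (s * ξ ^ 2 - 2 * κ * s * ρ * ξ) (κ ^ 2 * s ^ 2)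
    (by have : 0 < (1 - ρ ^ 2) * ξ ^ 2 := by positivity
        nlinarith)
  filter_upwards [fin_ev h1 u0, fin_ev (Set.finite_singleton (0 : ℝ)) u0,
    fin_ev (Set.finite_singleton s) u0] with u a b c
  refine ⟨by exact_mod_cast b, by exact_mod_cast c, ?_⟩
  rw [Qf_real]
  exact_mod_cast a

lemma hestLambdaC_eq (κ θ ξ v ρ t : ℝ) (hξ : 0 < ξ) (τ s : ℝ) (hs : 0 < s) (hτ : τ = s ^ 2) (z : ℂ)
    (hz : z ≠ 0) (hzs : z ≠ s) (hQ : Qf κ ρ ξ s z ≠ 0) (hY : ‖Yf κ ρ ξ s z‖ < 1)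
    (hD : 0 < (Df κ ρ ξ s z).re) :
    hestLambdaC κ θ ξ v ρ t τ z = s * Gf κ θ ξ v ρ t s z := by
  rw [hestLambdaC, hτ, Real.sqrt_sq hs.le, hestG_eq κ θ ξ v ρ t hξ s hs z hz hzs hQ hY hD]

lemma Gf_im (κ θ ξ v ρ t s u b : ℝ) (hD : 0 < (Df κ ρ ξ s u).re) (hb : Bf κ ρ ξ s u = b)
    (he : 1 - 2 * betaT κ ξ t * b < 0) :
    (Gf κ θ ξ v ρ t s u).im = -(2 * κ * θ / ξ ^ 2 * Real.pi) := by
  obtain ⟨-, a, ha⟩ := real_parts κ θ ρ ξ s u hD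
  have h1 : (1 - 2 * (betaT κ ξ t : ℂ) * Bf κ ρ ξ s u) = ((1 - 2 * betaT κ ξ t * b : ℝ) : ℂ) := by
    rw [hb]; push_cast; ring
  have h2 : Gf κ θ ξ v ρ t s u = ((a + b * v * Real.exp (-(κ * t)) / (1 - 2 * betaT κ ξ t * b) : ℝ) : ℂ)
      - ((2 * κ * θ / ξ ^ 2 : ℝ) : ℂ) * Complex.log ((1 - 2 * betaT κ ξ t * b : ℝ) : ℂ) := by
    rw [Gf, h1, ha, hb]; push_cast; ring
  rw [h2, Complex.sub_im, Complex.ofReal_im, Complex.im_ofReal_mul, Complex.log_im,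
    Complex.arg_ofReal_of_neg he]
  ring

lemma Gf_deriv (κ θ ξ v ρ t s : ℝ) (z : ℂ) (hY : ‖Yf κ ρ ξ s z‖ < 1) (hD : 0 < (Df κ ρ ξ s z).re)
    (he : 1 - 2 * (betaT κ ξ t : ℂ) * Bf κ ρ ξ s z ∈ Complex.slitPlane) :
    HasDerivAt (Gf κ θ ξ v ρ t s) (deriv (Af κ θ ρ ξ s) z +
      ((v * Real.exp (-(κ * t)) : ℝ) : ℂ) * deriv (Bf κ ρ ξ s) z /
        (1 - 2 * (betaT κ ξ t : ℂ) * Bf κ ρ ξ s z) ^ 2 +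
      2 * ((2 * κ * θ / ξ ^ 2 : ℝ) : ℂ) * (betaT κ ξ t : ℂ) * deriv (Bf κ ρ ξ s) z /
        (1 - 2 * (betaT κ ξ t : ℂ) * Bf κ ρ ξ s z)) z := by
  have hA := (Af_diff (θ := θ) hY hD).hasDerivAt
  have hB := (Bf_diff hY hD).hasDerivAt
  have h1 := (hB.const_mul (2 * (betaT κ ξ t : ℂ))).const_sub 1
  have hne := Complex.slitPlane_ne_zero he
  have h2 := ((hB.mul_const (v : ℂ)).mul_const ((Real.exp (-(κ * t)) : ℝ) : ℂ)).div h1 hne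
  have h3 := (h1.clog he).const_mul ((2 * κ * θ / ξ ^ 2 : ℝ) : ℂ)
  refine ((hA.add h2).sub h3).congr_deriv ?_
  push_cast
  field_simp
  ring

/-- what we know at the saddle point, for one fixed small `s = √τ` -/
lemma saddle_local (κ θ ξ v ρ t : ℝ) (hκ : 0 < κ) (hθ : 0 < θ) (hξ : 0 < ξ)
    (hρ : ρ ∈ Set.Ioo (-1 : ℝ) 1) (ht : 0 < t) (k : ℝ) (hk : k ≠ 0) (M C s τ us : ℝ)
    (hM0 : 0 < M) (hM : betaT κ ξ t * M ^ 2 = 4) (hs : 0 < s) (hτ : τ = s ^ 2) (hC : 0 < C)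
    (hsM : s < M)
    (hU : ∀ z : ℂ, ‖z‖ ≤ M + 1 → ‖Yf κ ρ ξ s z‖ < 1 ∧ 0 < (Df κ ρ ξ s z).re ∧
      ‖Bf κ ρ ξ s z - z ^ 2 / 2‖ ≤ C * s ∧ ‖Af κ θ ρ ξ s z‖ ≤ C * s)
    (hB' : ∀ z : ℂ, ‖z‖ ≤ M + 1 → ‖deriv (Bf κ ρ ξ s) z - z‖ ≤ C * s)
    (hQ1 : Qf κ ρ ξ s (M : ℝ) ≠ 0) (hQ2 : Qf κ ρ ξ s ((-M : ℝ) : ℂ) ≠ 0)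
    (hs1 : betaT κ ξ t * (C * s) < 1 / 4) (hs2 : betaT κ ξ t * (C * s) ^ 2 < 1 / 4)
    (hdom : us ∈ hestDom κ θ ξ v ρ t τ)
    (hder : deriv (hestLambda κ θ ξ v ρ t τ) us = (k : ℂ)) :
    |us| ≤ M ∧ ∃ b : ℝ, Bf κ ρ ξ s us = b ∧ 0 < 1 - 2 * betaT κ ξ t * b ∧
      hestLambdaC κ θ ξ v ρ t τ us = s * Gf κ θ ξ v ρ t s us ∧
      (s : ℂ) * (deriv (Af κ θ ρ ξ s) us +
      ((v * Real.exp (-(κ * t)) : ℝ) : ℂ) * deriv (Bf κ ρ ξ s) us /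
        (1 - 2 * (betaT κ ξ t : ℂ) * b) ^ 2 +
      2 * ((2 * κ * θ / ξ ^ 2 : ℝ) : ℂ) * (betaT κ ξ t : ℂ) * deriv (Bf κ ρ ξ s) us /
        (1 - 2 * (betaT κ ξ t : ℂ) * b)) = k := by
  have hβ := betaT_pos hκ hξ ht
  obtain ⟨β, hβe⟩ : ∃ β, β = betaT κ ξ t := ⟨_, rfl⟩
  rw [← hβe] at hβ hM hs1 hs2 ⊢
  have hα : 0 < 2 * κ * θ / ξ ^ 2 := by positivity
  -- real-valuedness fails at ±M
  have hbad : ∀ m : ℝ, |m| = M → Qf κ ρ ξ s m ≠ 0 → (hestLambda κ θ ξ v ρ t τ m).im ≠ 0 := by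
    intro m hm hQ
    have hn : ‖(m : ℂ)‖ ≤ M + 1 := by rw [Complex.norm_real, Real.norm_eq_abs, hm]; linarith
    obtain ⟨h1, h2, h3, -⟩ := hU m hn
    obtain ⟨⟨b, hb⟩, -⟩ := real_parts κ θ ρ ξ s m h2
    have hm0 : m ≠ 0 := by rintro rfl; simp at hm; linarith
    have hms : m ≠ s := by
      rintro rfl; rw [abs_of_pos hs] at hm; linarith
    have hbm : |b - m ^ 2 / 2| ≤ C * s := by
      rw [hb] at h3
      have : ((b : ℂ) - (m : ℂ) ^ 2 / 2) = ((b - m ^ 2 / 2 : ℝ) : ℂ) := by push_cast; ring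
      rwa [this, Complex.norm_real] at h3
    have hm2 : m ^ 2 = M ^ 2 := by rw [← sq_abs, hm]
    have he : 1 - 2 * betaT κ ξ t * b < 0 := by
      rw [← hβe]
      rw [abs_le, hm2] at hbm
      nlinarith [mul_le_mul_of_nonneg_left hbm.1 hβ.le]
    rw [hestLambda, hestLambdaC_eq κ θ ξ v ρ t hξ τ s hs hτ m (by exact_mod_cast hm0)
      (by exact_mod_cast hms) hQ h1 h2, Complex.im_ofReal_mul, Gf_im κ θ ξ v ρ t s m b h2 hb he]
    have := mul_pos hs (mul_pos hα Real.pi_pos)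
    intro h
    linarith
  have husM : |us| < M := by
    have hconn : (hestDom κ θ ξ v ρ t τ).OrdConnected :=
      isPreconnected_connectedComponentIn.ordConnected
    have hsub : hestDom κ θ ξ v ρ t τ ⊆ {u : ℝ | (hestLambda κ θ ξ v ρ t τ u).im = 0} :=
      (connectedComponentIn_subset _ _).trans interior_subset
    have h0 : (0 : ℝ) ∈ hestDom κ θ ξ v ρ t τ :=
      mem_connectedComponentIn (connectedComponentIn_nonempty_iff.mp ⟨us, hdom⟩)
    rw [abs_lt]
    constructor
    · by_contra hcon
      push Not at hcon
      exact hbad (-M) (by rw [abs_neg, abs_of_pos hM0]) hQ2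
        (hsub (hconn.out hdom h0 ⟨hcon, by linarith⟩))
    · by_contra hcon
      push Not at hcon
      exact hbad M (abs_of_pos hM0) hQ1 (hsub (hconn.out h0 hdom ⟨hM0.le, hcon⟩))
  refine ⟨husM.le, ?_⟩
  have hnus : ‖(us : ℂ)‖ ≤ M + 1 := by rw [Complex.norm_real, Real.norm_eq_abs]; linarith
  obtain ⟨h1, h2, h3, -⟩ := hU us hnus
  obtain ⟨⟨b, hb⟩, -⟩ := real_parts κ θ ρ ξ s us h2
  have hball : ∀ᶠ u : ℝ in 𝓝 us, |u| < M := continuous_abs.continuousAt.eventually_lt_const husM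
  -- agreement with the smooth function near `us`
  have hfg : ∀ᶠ u : ℝ in 𝓝[≠] us, hestLambda κ θ ξ v ρ t τ u = s * Gf κ θ ξ v ρ t s u := by
    filter_upwards [Qf_ev κ ρ ξ s hξ hρ us, nhdsWithin_le_nhds hball] with u ⟨q1, q2, q3⟩ q4
    have hn : ‖(u : ℂ)‖ ≤ M + 1 := by rw [Complex.norm_real, Real.norm_eq_abs]; linarith
    exact hestLambdaC_eq κ θ ξ v ρ t hξ τ s hs hτ u q1 q2 q3 (hU u hn).1 (hU u hn).2.1
  have hint : ∀ᶠ u : ℝ in 𝓝 us, (hestLambda κ θ ξ v ρ t τ u).im = 0 := by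
    have := connectedComponentIn_subset _ _ hdom
    exact mem_interior_iff_mem_nhds.mp this
  have hre : ∀ᶠ u : ℝ in 𝓝[≠] us, 0 ≤ 1 - 2 * β * (Bf κ ρ ξ s u).re := by
    filter_upwards [hfg, nhdsWithin_le_nhds hint, nhdsWithin_le_nhds hball] with u q1 q2 q3
    have hn : ‖(u : ℂ)‖ ≤ M + 1 := by rw [Complex.norm_real, Real.norm_eq_abs]; linarith
    obtain ⟨⟨b', hb'⟩, -⟩ := real_parts κ θ ρ ξ s u (hU u hn).2.1
    by_contra hcon
    push Not at hcon
    rw [hb', Complex.ofReal_re, hβe] at hcon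
    rw [q1, Complex.im_ofReal_mul, Gf_im κ θ ξ v ρ t s u b' (hU u hn).2.1 hb' hcon] at q2
    have := mul_pos hs (mul_pos hα Real.pi_pos)
    linarith
  have hBd := (Bf_diff h1 h2).hasDerivAt
  have hBr := hBd.real_of_complex
  have hed : HasDerivAt (fun u : ℝ => 1 - 2 * β * (Bf κ ρ ξ s u).re)
      (-(2 * β * (deriv (Bf κ ρ ξ s) us).re)) us := (hBr.const_mul (2 * β)).const_sub 1
  have hge : 0 ≤ 1 - 2 * β * b := by
    have ht := hed.continuousAt.tendsto.mono_left (nhdsWithin_le_nhds (s := {us}ᶜ))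
    have := ge_of_tendsto ht hre
    simpa [hb] using this
  have hpos : 0 < 1 - 2 * β * b := by
    rcases hge.lt_or_eq with h | h
    · exact h
    exfalso
    have hmin : IsLocalMin (fun u : ℝ => 1 - 2 * β * (Bf κ ρ ξ s u).re) us := by
      have h' := eventually_nhdsWithin_iff.mp hre
      filter_upwards [h'] with u hu
      by_cases hu0 : u = us
      · rw [hu0]
      · simp only [hb, Complex.ofReal_re]
        rw [← h]; exact hu hu0
    have hz := hmin.hasDerivAt_eq_zero hed
    have hz' : (deriv (Bf κ ρ ξ s) us).re = 0 := by
      have : β * (deriv (Bf κ ρ ξ s) us).re = 0 := by linarith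
      exact (mul_eq_zero.mp this).resolve_left hβ.ne'
    have hu1 : |us| ≤ C * s := by
      have := (Complex.abs_re_le_norm _).trans (hB' us hnus)
      rw [Complex.sub_re, hz', Complex.ofReal_re, zero_sub, abs_neg] at this
      exact this
    have hbm : |b - us ^ 2 / 2| ≤ C * s := by
      rw [hb] at h3
      have : ((b : ℂ) - (us : ℂ) ^ 2 / 2) = ((b - us ^ 2 / 2 : ℝ) : ℂ) := by push_cast; ring
      rwa [this, Complex.norm_real] at h3
    have hsq : us ^ 2 ≤ (C * s) ^ 2 := by
      rw [← sq_abs]; gcongr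
    rw [abs_le] at hbm
    nlinarith [mul_le_mul_of_nonneg_left hbm.2 hβ.le, mul_le_mul_of_nonneg_left hsq hβ.le]
  have hslit : 1 - 2 * (betaT κ ξ t : ℂ) * Bf κ ρ ξ s us ∈ Complex.slitPlane := by
    have : 1 - 2 * (betaT κ ξ t : ℂ) * Bf κ ρ ξ s us = ((1 - 2 * β * b : ℝ) : ℂ) := by
      rw [hb, ← hβe]; push_cast; ring
    rw [this]
    exact Complex.ofReal_mem_slitPlane.mpr hpos
  have hG := ((Gf_deriv κ θ ξ v ρ t s us h1 h2 hslit).const_mul (s : ℂ)).comp_ofReal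
  have hfd : DifferentiableAt ℝ (hestLambda κ θ ξ v ρ t τ) us := by
    apply differentiableAt_of_deriv_ne_zero
    rw [hder]; exact_mod_cast hk
  have heq : hestLambda κ θ ξ v ρ t τ us = s * Gf κ θ ξ v ρ t s us := by
    have t1 := hfd.continuousAt.tendsto.mono_left (nhdsWithin_le_nhds (s := {us}ᶜ))
    have t2 := hG.continuousAt.tendsto.mono_left (nhdsWithin_le_nhds (s := {us}ᶜ))
    exact tendsto_nhds_unique (t1.congr' hfg) t2
  have hfull : hestLambda κ θ ξ v ρ t τ =ᶠ[𝓝 us] fun u : ℝ => s * Gf κ θ ξ v ρ t s u := by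
    have h' := eventually_nhdsWithin_iff.mp hfg
    filter_upwards [h'] with u hu
    by_cases hu0 : u = us
    · rw [hu0]; exact heq
    · exact hu hu0
  refine ⟨b, hb, hpos, heq, ?_⟩
  rw [hfull.deriv_eq, hG.deriv, hb, ← hβe] at hder
  exact hder


/-! ### Assembly -/

lemma taylor_bds (κ θ ρ ξ s C R : ℝ) (z0 h : ℂ) (h0 : ‖z0‖ ≤ R) (h1 : ‖z0 + h‖ ≤ R)
    (hU : ∀ z : ℂ, ‖z‖ ≤ R → ‖Yf κ ρ ξ s z‖ < 1 ∧ 0 < (Df κ ρ ξ s z).re)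
    (hB' : ∀ z : ℂ, ‖z‖ ≤ R → ‖deriv (Bf κ ρ ξ s) z - z‖ ≤ C * s)
    (hA' : ∀ z : ℂ, ‖z‖ ≤ R → ‖deriv (Af κ θ ρ ξ s) z‖ ≤ C * s) :
    ‖Bf κ ρ ξ s (z0 + h) - Bf κ ρ ξ s z0 - deriv (Bf κ ρ ξ s) z0 * h - h ^ 2 / 2‖ ≤
      2 * (C * s) * ‖h‖ ∧
    ‖Af κ θ ρ ξ s (z0 + h) - Af κ θ ρ ξ s z0 - deriv (Af κ θ ρ ξ s) z0 * h‖ ≤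
      2 * (C * s) * ‖h‖ := by
  have hmem : ∀ z : ℂ, z ∈ Metric.closedBall (0 : ℂ) R ↔ ‖z‖ ≤ R := by intro z; simp
  have hd : ∀ z : ℂ, ‖z‖ ≤ R → HasDerivAt (fun z => Bf κ ρ ξ s z - z ^ 2 / 2)
      (deriv (Bf κ ρ ξ s) z - z) z := by
    intro z hz
    refine (((Bf_diff (hU z hz).1 (hU z hz).2).hasDerivAt).sub
      (((hasDerivAt_id z).pow 2).div_const 2)).congr_deriv ?_
    simp
  constructor
  · have key := Convex.norm_image_sub_le_of_norm_deriv_le (𝕜 := ℂ)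
      (f := fun z => Bf κ ρ ξ s z - z ^ 2 / 2) (C := C * s) (s := Metric.closedBall (0 : ℂ) R)
      (x := z0) (y := z0 + h) (fun z hz => (hd z ((hmem z).mp hz)).differentiableAt)
      (fun z hz => by rw [(hd z ((hmem z).mp hz)).deriv]; exact hB' z ((hmem z).mp hz))
      (convex_closedBall _ _) ((hmem _).mpr h0) ((hmem _).mpr h1)
    have h2 : ‖(deriv (Bf κ ρ ξ s) z0 - z0) * h‖ ≤ C * s * ‖h‖ := by
      rw [norm_mul]; exact mul_le_mul_of_nonneg_right (hB' z0 h0) (norm_nonneg _)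
    have h3 : Bf κ ρ ξ s (z0 + h) - Bf κ ρ ξ s z0 - deriv (Bf κ ρ ξ s) z0 * h - h ^ 2 / 2 =
      (Bf κ ρ ξ s (z0 + h) - (z0 + h) ^ 2 / 2 - (Bf κ ρ ξ s z0 - z0 ^ 2 / 2)) -
        (deriv (Bf κ ρ ξ s) z0 - z0) * h := by ring
    rw [h3]
    refine (norm_sub_le _ _).trans ?_
    rw [add_sub_cancel_left] at key
    linarith
  · have key := Convex.norm_image_sub_le_of_norm_deriv_le (𝕜 := ℂ)
      (f := Af κ θ ρ ξ s) (C := C * s) (s := Metric.closedBall (0 : ℂ) R)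
      (x := z0) (y := z0 + h)
      (fun z hz => Af_diff (hU z ((hmem z).mp hz)).1 (hU z ((hmem z).mp hz)).2)
      (fun z hz => hA' z ((hmem z).mp hz))
      (convex_closedBall _ _) ((hmem _).mpr h0) ((hmem _).mpr h1)
    have h2 : ‖deriv (Af κ θ ρ ξ s) z0 * h‖ ≤ C * s * ‖h‖ := by
      rw [norm_mul]; exact mul_le_mul_of_nonneg_right (hA' z0 h0) (norm_nonneg _)
    refine (norm_sub_le _ _).trans ?_
    rw [add_sub_cancel_left] at key
    linarith

lemma exponent_id (x e : ℝ) (V β α u k A0 A1 Az B0 B1 Bz σ ε Q Ac : ℂ) (hx : 0 < x) (he : 0 < e)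
    (hβ : β ≠ 0) (hB0 : 1 - 2 * β * B0 = e)
    (hk : (x : ℂ) ^ 4 * (A1 + V * B1 / (e : ℂ) ^ 2 + 2 * α * β * B1 / e) = k)
    (hσ : σ = (Bz - B0 - B1 * (Complex.I * u * (x : ℂ) ^ 3)) / (x : ℂ) ^ 6)
    (hε : ε = e / (x : ℂ) ^ 2) (hQ : Q = 2 * β * ((Complex.I * u * B1 + (x : ℂ) ^ 3 * σ) * ε⁻¹))
    (hAc : Ac = Az - A0 - A1 * (Complex.I * u * (x : ℂ) ^ 3)) (hne : 1 - (x : ℂ) * Q ≠ 0) :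
    -Complex.I * u * k * (x : ℂ)⁻¹ + ((x : ℂ) ^ 4)⁻¹ *
      ((x : ℂ) ^ 4 * (Az + Bz * V / (1 - 2 * β * Bz) - α * Complex.log (1 - 2 * β * Bz)) -
       (x : ℂ) ^ 4 * (A0 + B0 * V / (1 - 2 * β * B0) - α * Complex.log (1 - 2 * β * B0))) =
    Ac + V / (2 * β) * (ε⁻¹ * (Q * Q * (1 - (x : ℂ) * Q)⁻¹)) +
        V * ((x : ℂ) ^ 2 * σ * (ε⁻¹ * ε⁻¹)) - α * (Complex.log (1 - (x : ℂ) * Q) + (x : ℂ) * Q) +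
        2 * α * β * ((x : ℂ) ^ 4 * σ * ε⁻¹) := by
  have hxc : (x : ℂ) ≠ 0 := by exact_mod_cast hx.ne'
  have hec : (e : ℂ) ≠ 0 := by exact_mod_cast he.ne'
  have hBz : 1 - 2 * β * Bz = e * (1 - (x : ℂ) * Q) := by
    rw [hQ, hσ, hε]
    field_simp
    linear_combination hB0
  have hlog : Complex.log (1 - 2 * β * Bz) = Real.log e + Complex.log (1 - (x : ℂ) * Q) := by
    rw [hBz, Complex.log_ofReal_mul he hne]
  have hlog0 : Complex.log (1 - 2 * β * B0) = Real.log e := by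
    rw [hB0, Complex.ofReal_log he.le]
  rw [hlog, hlog0, hB0, hBz]
  have hBz' : Bz = (1 - e * (1 - (x : ℂ) * Q)) / (2 * β) := by
    field_simp; linear_combination -hBz
  have hB0' : B0 = (1 - e) / (2 * β) := by
    field_simp; linear_combination -hB0
  have hσ' : σ = (e * Q * x / (2 * β) - B1 * (Complex.I * u * (x : ℂ) ^ 3)) / (x : ℂ) ^ 6 := by
    rw [hσ, hBz', hB0']; field_simp; ring
  rw [hσ', hAc, hε, ← hk, hBz', hB0']
  field_simp
  ring

/-! ### The coefficients -/

lemma coef_facts (κ θ ξ v ρ t k : ℝ) (hκ : 0 < κ) (hθ : 0 < θ) (hξ : 0 < ξ)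
    (hv : 0 < v) (ht : 0 < t) (hk : k ≠ 0) (β V α a0 e0 : ℝ) (hβ : β = betaT κ ξ t)
    (hV : V = v * Real.exp (-(κ * t))) (hα : α = 2 * κ * θ / ξ ^ 2)
    (ha : a0 = coefA0 κ θ ξ v ρ t k) (he : e0 = coefE0 κ θ ξ v ρ t k) :
    β * a0 ^ 2 = 1 ∧ 0 < a0 * k ∧ 0 < e0 ∧ k * e0 ^ 2 = V * a0 ∧
    coefA1 κ θ ξ v ρ t k = -(a0 * e0 / 2) ∧
    coefE1 κ θ ξ v ρ t k = a0 * (2 * α * β - V / 2) / (2 * k) ∧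
    coefZeta κ θ ξ v ρ t k ^ 2 = 4 * V / e0 ^ 3 := by
  have hβ0 : 0 < β := hβ ▸ betaT_pos hκ hξ ht
  have hVp : 0 < V := by rw [hV]; positivity
  have hsq : Real.sqrt β ^ 2 = β := Real.sq_sqrt hβ0.le
  have hsp : 0 < Real.sqrt β := Real.sqrt_pos.mpr hβ0
  have hkp : 0 < |k| := abs_pos.mpr hk
  have hsgn : sgn' k ^ 2 = 1 ∧ sgn' k * k = |k| := by
    unfold sgn'
    split_ifs with h
    · simp [abs_of_nonneg h]
    · push Not at h; simp [abs_of_neg h]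
  have ha' : a0 = sgn' k / Real.sqrt β := by rw [ha, coefA0, hβ]
  have h1 : β * a0 ^ 2 = 1 := by
    rw [ha', div_pow, hsgn.1, hsq]; field_simp
  have ha0 : a0 ≠ 0 := by rintro h; rw [h] at h1; simp at h1
  have h2' : a0 * k = |k| / Real.sqrt β := by rw [ha', div_mul_eq_mul_div, hsgn.2]
  have h2 : 0 < a0 * k := by rw [h2']; positivity
  have hA1 : coefA1 κ θ ξ v ρ t k = -(a0 * e0 / 2) := by
    rw [he, coefE0, ← ha]; field_simp
  have he' : e0 = Real.sqrt v * Real.exp (-(κ * t) / 2) / (Real.sqrt |k| * β ^ ((1 : ℝ) / 4)) := by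
    rw [he, coefE0, coefA1, ← ha, ← hβ]
    field_simp
  have hexp : Real.exp (-(κ * t) / 2) ^ 2 = Real.exp (-(κ * t)) := by
    rw [← Real.exp_nat_mul]; congr 1; push_cast; ring
  have hq : (β ^ ((1 : ℝ) / 4)) ^ 2 = Real.sqrt β := by
    rw [← Real.rpow_natCast, ← Real.rpow_mul hβ0.le, Real.sqrt_eq_rpow]; norm_num
  have h3 : 0 < e0 := by rw [he']; positivity
  have he2 : e0 ^ 2 = V / (|k| * Real.sqrt β) := by
    rw [he', div_pow, mul_pow, mul_pow, hexp, hq, Real.sq_sqrt hv.le, Real.sq_sqrt hkp.le, hV]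
  have h4 : k * e0 ^ 2 = V * a0 := by
    rw [he2, ← hsgn.2]
    have : sgn' k ≠ 0 := by rintro h; rw [h] at hsgn; simp at hsgn
    rw [ha']; field_simp; linear_combination -hsgn.1
  refine ⟨h1, h2, h3, h4, hA1, ?_, ?_⟩
  · have hks : |k| * Real.sqrt β = k * (β * a0) := by
      have : |k| = a0 * k * Real.sqrt β := by rw [h2']; field_simp
      rw [this]; linear_combination a0 * k * hsq
    rw [coefE1, coefR, hA1, ← hβ]
    have : κ * θ / (|k| * ξ ^ 2 * Real.sqrt β) = α / 2 / (k * (β * a0)) := by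
      rw [← hks, hα]; field_simp
    rw [this]
    field_simp
    linear_combination (-β * a0 ^ 3) * h4 + (-4 * α - a0 ^ 2 * V) * h1
  · rw [coefZeta, ← he, div_pow, mul_pow, mul_pow, hexp, Real.sq_sqrt hv.le,
      ← Real.rpow_natCast (e0 ^ ((3 : ℝ) / 2)), ← Real.rpow_mul h3.le, hV, show (3 : ℝ) / 2 * ((2 : ℕ) : ℝ) = ((3 : ℕ) : ℝ) by norm_num,
      Real.rpow_natCast]
    norm_num
    ring

lemma phi_facts (κ θ ξ v ρ t k u : ℝ) (hκ : 0 < κ) (hθ : 0 < θ) (hξ : 0 < ξ)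
    (hv : 0 < v) (ht : 0 < t) (hk : k ≠ 0) (β V α a0 e0 e1 : ℝ) (hβ : β = betaT κ ξ t)
    (hV : V = v * Real.exp (-(κ * t))) (hα : α = 2 * κ * θ / ξ ^ 2)
    (ha : a0 = coefA0 κ θ ξ v ρ t k) (he : e0 = coefE0 κ θ ξ v ρ t k)
    (he1 : e1 = a0 * (2 * α * β - V / 2) / (2 * k)) :
    phi1C κ θ ξ v ρ t k u = -4 * Complex.I * u ^ 3 * V * β * a0 / e0 ^ 4 ∧
    ((phi2R κ θ ξ v ρ t k u : ℝ) : ℂ) = (u ^ 2 * (V * (3 * e0 ^ 2 + 12 * e1) / (2 * e0 ^ 4) -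
        2 * α * β / e0 ^ 2) + u ^ 4 * (8 * V * β / e0 ^ 5) +
        (-4 * Complex.I * u ^ 3 * V * β * a0 / e0 ^ 4) ^ 2 / 2) := by
  obtain ⟨h1, h2, h3, h4, hA1, hE1, -⟩ :=
    coef_facts κ θ ξ v ρ t k hκ hθ hξ hv ht hk β V α a0 e0 hβ hV hα ha he
  have hVp : 0 < V := by rw [hV]; positivity
  have ha0 : a0 ≠ 0 := by rintro h; rw [h] at h1; simp at h1
  have hE : coefE1 κ θ ξ v ρ t k = e0 ^ 2 * (α * β / V - 1 / 4) := by
    rw [hE1]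
    field_simp
    linear_combination (-16 * α * β + 4 * V) * h4
  have he1' : e1 = e0 ^ 2 * (α * β / V - 1 / 4) := by rw [← hE, hE1, he1]
  have hp0 : coefPsi0 κ θ ξ v ρ t k = -(2 * a0 * α * β / e0) := by
    rw [coefPsi0, ← ha, ← he, ← hβ, hA1, hE, mul_assoc a0 v, ← hV]
    field_simp
    linear_combination (-8 * V - 16 * α * β) * h1
  have hp1 : coefPsi1 κ θ ξ v ρ t k = -4 * V * β * a0 / e0 ^ 4 := by
    rw [coefPsi1, ← ha, ← he, ← hβ, hV]; ring
  have hp2 : coefPsi2 κ θ ξ v ρ t k = V * (3 * e0 ^ 2 + 12 * e1) / (2 * e0 ^ 4) := by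
    rw [coefPsi2, ← ha, ← he, ← hβ, hA1, hE, ← hV, he1']
    field_simp
    linear_combination (40 * V + 96 * α * β) * h1
  have hp3 : coefPsi3 κ θ ξ v ρ t k = 8 * V * β / e0 ^ 5 := by
    rw [coefPsi3, ← he, ← hβ, hV]; ring
  have hl : 4 * a0 * κ * θ * β / (e0 * ξ ^ 2) = 2 * a0 * α * β / e0 := by
    rw [hα]; field_simp; ring
  constructor
  · rw [phi1C, hp1, ← ha, ← he, ← hβ, hl, hp0]
    push_cast
    ring
  · have h2a : coefPhi2a κ θ ξ v ρ t k = V * (3 * e0 ^ 2 + 12 * e1) / (2 * e0 ^ 4) -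
        2 * α * β / e0 ^ 2 := by
      rw [coefPhi2a, hp2, hp0, ← ha, ← he, ← hβ]
      have e1 : 4 * κ * θ * β / ξ ^ 2 = 2 * α * β := by rw [hα]; field_simp; ring
      have e2 : ∀ y, y * (2 * κ * θ + ξ ^ 2) / (e0 ^ 2 * ξ ^ 2) = y * (α + 1) / e0 ^ 2 := by
        intro y; rw [hα]; field_simp
      rw [e1, e2]
      field_simp
      linear_combination 4 * α ^ 2 * β * e0 ^ 2 * h1
    have h2b : coefPhi2b κ θ ξ v ρ t k = 8 * V * β / e0 ^ 5 := by
      rw [coefPhi2b, hp3, hp0, ← ha, ← he, ← hβ]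
      have e1 : 4 * κ * θ * β / ξ ^ 2 = 2 * α * β := by rw [hα]; field_simp; ring
      rw [e1]; ring
    rw [phi2R, h2a, h2b, coefPhi2c, hp1]
    push_cast
    linear_combination (-(u : ℂ)^6 * (16 * (V:ℂ)^2 * β^2 * a0^2/ e0 ^8) / 2) * Complex.I_sq


/-! ### Main theorem -/

lemma Qf_cont (κ ρ ξ : ℝ) : Continuous fun p : ℝ × ℂ => Qf κ ρ ξ p.1 p.2 := by
  unfold Qf; fun_prop

lemma Qf_zero_ne (κ ρ ξ : ℝ) (hξ : 0 < ξ) (hρ : ρ ∈ Set.Ioo (-1 : ℝ) 1) (m : ℝ) (hm : m ≠ 0) :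
    Qf κ ρ ξ 0 (m : ℂ) ≠ 0 := by
  have hρ2 : 0 < 1 - ρ ^ 2 := by nlinarith [hρ.1, hρ.2]
  have : 0 < (1 - ρ ^ 2) * ξ ^ 2 * m ^ 2 := by positivity
  rw [Qf_real]
  refine Complex.ofReal_ne_zero.mpr ?_
  nlinarith

lemma small_s (κ ρ ξ : ℝ) (hξ : 0 < ξ) (hρ : ρ ∈ Set.Ioo (-1 : ℝ) 1) (β M C : ℝ) (hM : 0 < M) :
    ∀ᶠ s in 𝓝[>] (0 : ℝ), s < M ∧ β * (C * s) < 1 / 4 ∧ β * (C * s) ^ 2 < 1 / 4 ∧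
      Qf κ ρ ξ s (M : ℝ) ≠ 0 ∧ Qf κ ρ ξ s ((-M : ℝ) : ℂ) ≠ 0 := by
  have h1 : ∀ᶠ s in 𝓝 (0 : ℝ), s < M := eventually_lt_nhds hM
  have h2 : ∀ᶠ s in 𝓝 (0 : ℝ), β * (C * s) < 1 / 4 :=
    (by fun_prop : Continuous fun s : ℝ => β * (C * s)).continuousAt.eventually_lt_const (by simp)
  have h3 : ∀ᶠ s in 𝓝 (0 : ℝ), β * (C * s) ^ 2 < 1 / 4 :=
    (by fun_prop : Continuous fun s : ℝ => β * (C * s) ^ 2).continuousAt.eventually_lt_const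
      (by simp)
  have h4 : ∀ m : ℝ, m ≠ 0 → ∀ᶠ s in 𝓝 (0 : ℝ), Qf κ ρ ξ s (m : ℂ) ≠ 0 := fun m hm =>
    ((Qf_cont κ ρ ξ).comp (by fun_prop : Continuous fun s : ℝ => (s, (m : ℂ)))).continuousAt.eventually_ne
      (Qf_zero_ne κ ρ ξ hξ hρ m hm)
  exact nhdsWithin_le_nhds (h1.and (h2.and (h3.and ((h4 M hM.ne').and (h4 (-M) (by linarith))))))

lemma rpow_facts (τ x : ℝ) (hτ : 0 < τ) (hx : x = τ ^ ((1 : ℝ) / 8)) :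
    0 < x ∧ τ = (x ^ 4) ^ 2 ∧ Real.sqrt τ = x ^ 4 ∧ τ ^ ((3 : ℝ) / 8) = x ^ 3 ∧
    τ ^ ((1 : ℝ) / 4) = x ^ 2 ∧ τ ^ (-(1 : ℝ) / 8) = x⁻¹ ∧ τ ^ (-(1 : ℝ) / 2) = (x ^ 4)⁻¹ := by
  have hx0 : 0 < x := hx ▸ Real.rpow_pos_of_pos hτ _
  have hp : ∀ n : ℕ, x ^ n = τ ^ ((1 : ℝ) / 8 * n) := fun n => by
    rw [hx, ← Real.rpow_natCast, ← Real.rpow_mul hτ.le]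
  refine ⟨hx0, ?_, ?_, ?_, ?_, ?_, ?_⟩
  · rw [← pow_mul, hp]; norm_num
  · rw [hp, Real.sqrt_eq_rpow]; norm_num
  · rw [hp]; norm_num
  · rw [hp]; norm_num
  · rw [hx, ← Real.rpow_neg hτ.le]; norm_num
  · rw [hp, ← Real.rpow_neg hτ.le]; norm_num

/-- everything known eventually, in terms of `x = τ^(1/8)` -/
lemma ev_facts (κ θ ξ v ρ t : ℝ) (hκ : 0 < κ) (hθ : 0 < θ) (hξ : 0 < ξ)
    (hv : 0 < v) (hρ : ρ ∈ Set.Ioo (-1 : ℝ) 1) (ht : 0 < t)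
    (k : ℝ) (hk : k ≠ 0) (ustar : ℝ → ℝ)
    (hustar : ∀ᶠ τ in 𝓝[>] (0 : ℝ), ustar τ ∈ hestDom κ θ ξ v ρ t τ ∧
      deriv (hestLambda κ θ ξ v ρ t τ) (ustar τ) = (k : ℂ)) (x : ℝ → ℝ)
    (hx : x = fun τ => τ ^ ((1 : ℝ) / 8)) :
    ∃ M C : ℝ, 0 < M ∧ 0 < C ∧ ∀ᶠ τ in 𝓝[>] (0 : ℝ), 0 < τ ∧
      (∀ z : ℂ, ‖z‖ ≤ M + 1 → ‖Yf κ ρ ξ (x τ ^ 4) z‖ < 1 ∧ 0 < (Df κ ρ ξ (x τ ^ 4) z).re) ∧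
      (∀ z : ℂ, ‖z‖ ≤ M + 1 → ‖Bf κ ρ ξ (x τ ^ 4) z - z ^ 2 / 2‖ ≤ C * x τ ^ 4) ∧
      (∀ z : ℂ, ‖z‖ ≤ M + 1 → ‖deriv (Bf κ ρ ξ (x τ ^ 4)) z - z‖ ≤ C * x τ ^ 4) ∧
      (∀ z : ℂ, ‖z‖ ≤ M + 1 → ‖deriv (Af κ θ ρ ξ (x τ ^ 4)) z‖ ≤ C * x τ ^ 4) ∧
      |ustar τ| ≤ M ∧ ∃ b : ℝ, Bf κ ρ ξ (x τ ^ 4) (ustar τ) = b ∧ 0 < 1 - 2 * betaT κ ξ t * b ∧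
      hestLambdaC κ θ ξ v ρ t τ (ustar τ) =
        ((x τ ^ 4 : ℝ) : ℂ) * Gf κ θ ξ v ρ t (x τ ^ 4) (ustar τ) ∧
      ((x τ ^ 4 : ℝ) : ℂ) * (deriv (Af κ θ ρ ξ (x τ ^ 4)) (ustar τ) +
      ((v * Real.exp (-(κ * t)) : ℝ) : ℂ) * deriv (Bf κ ρ ξ (x τ ^ 4)) (ustar τ) /
        (1 - 2 * (betaT κ ξ t : ℂ) * b) ^ 2 +
      2 * ((2 * κ * θ / ξ ^ 2 : ℝ) : ℂ) * (betaT κ ξ t : ℂ) * deriv (Bf κ ρ ξ (x τ ^ 4)) (ustar τ) /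
        (1 - 2 * (betaT κ ξ t : ℂ) * b)) = k := by
  have hβ := betaT_pos hκ hξ ht
  obtain ⟨M, hMdef⟩ : ∃ M, M = 2 / Real.sqrt (betaT κ ξ t) := ⟨_, rfl⟩
  have hM0 : 0 < M := by rw [hMdef]; positivity
  have hM : betaT κ ξ t * M ^ 2 = 4 := by
    rw [hMdef, div_pow, Real.sq_sqrt hβ.le]; field_simp; norm_num
  obtain ⟨C1, hC1, H1⟩ := unif κ θ ρ ξ (M + 1)
  obtain ⟨C2, hC2, H2⟩ := unif_deriv κ θ ρ ξ (M + 1)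
  refine ⟨M, C1 + C2, hM0, by positivity, ?_⟩
  have H3 := small_s κ ρ ξ hξ hρ (betaT κ ξ t) M (C1 + C2) hM0
  have hst : Tendsto Real.sqrt (𝓝[>] 0) (𝓝[>] 0) := by
    refine tendsto_nhdsWithin_iff.mpr ⟨?_, ?_⟩
    · have := Real.continuous_sqrt.tendsto 0
      rw [Real.sqrt_zero] at this
      exact this.mono_left nhdsWithin_le_nhds
    · filter_upwards [self_mem_nhdsWithin] with τ hτ
      exact Real.sqrt_pos.mpr hτ
  filter_upwards [self_mem_nhdsWithin, hst.eventually H1, hst.eventually H2, hst.eventually H3,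
    hustar] with τ hτ h1 h2 h3 h4
  have hτ0 : 0 < τ := hτ
  obtain ⟨r1, r2, r3, -⟩ := rpow_facts τ (x τ) hτ0 (by rw [hx])
  rw [r3] at h1 h2 h3
  have hs : 0 < x τ ^ 4 := by positivity
  have c1 : C1 * x τ ^ 4 ≤ (C1 + C2) * x τ ^ 4 := by nlinarith
  have c2 : C2 * x τ ^ 4 ≤ (C1 + C2) * x τ ^ 4 := by nlinarith
  refine ⟨hτ0, fun z hz => ⟨(h1 z hz).1, (h1 z hz).2.1⟩, fun z hz => (h1 z hz).2.2.1.trans c1,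
    fun z hz => (h2 z hz).1.trans c2, fun z hz => (h2 z hz).2.trans c2, ?_⟩
  exact saddle_local κ θ ξ v ρ t hκ hθ hξ hρ ht k hk M (C1 + C2) (x τ ^ 4) τ (ustar τ) hM0 hM hs r2
    (by positivity) h3.1 (fun z hz => ⟨(h1 z hz).1, (h1 z hz).2.1, (h1 z hz).2.2.1.trans c1,
      (h1 z hz).2.2.2.trans c1⟩) (fun z hz => (h2 z hz).1.trans c2) h3.2.2.2.1 h3.2.2.2.2
    h3.2.1 h3.2.2.1 h4.1 h4.2


lemma Qf_tendsto (κ ρ ξ : ℝ) (l : Filter ℝ) (s : ℝ → ℝ) (z : ℝ → ℂ) (s0 : ℝ) (z0 : ℂ)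
    (hs : Tendsto s l (𝓝 s0)) (hz : Tendsto z l (𝓝 z0)) :
    Tendsto (fun τ => Qf κ ρ ξ (s τ) (z τ)) l (𝓝 (Qf κ ρ ξ s0 z0)) := by
  unfold Qf
  have hs' : Tendsto (fun τ => (s τ : ℂ)) l (𝓝 (s0 : ℂ)) :=
    (Complex.continuous_ofReal.tendsto s0).comp hs
  exact (((hs'.const_mul (κ : ℂ)).sub (hz.const_mul ((ρ : ℂ) * ξ))).pow 2).add
    ((hz.mul (hs'.sub hz)).mul_const ((ξ : ℂ) ^ 2))

set_option maxHeartbeats 1000000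

theorem stmt15 (κ θ ξ v ρ t : ℝ) (hκ : 0 < κ) (hθ : 0 < θ) (hξ : 0 < ξ)
    (hv : 0 < v) (hρ : ρ ∈ Set.Ioo (-1 : ℝ) 1) (ht : 0 < t)
    (k : ℝ) (hk : k ≠ 0) (ustar : ℝ → ℝ)
    (hustar : ∀ᶠ τ in 𝓝[>] (0 : ℝ), ustar τ ∈ hestDom κ θ ξ v ρ t τ ∧
      deriv (hestLambda κ θ ξ v ρ t τ) (ustar τ) = (k : ℂ)) (u : ℝ) :
    (fun τ : ℝ => hestPhi κ θ ξ v ρ t k ustar τ u -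
        ((Real.exp (-(coefZeta κ θ ξ v ρ t k) ^ 2 * u ^ 2 / 2) : ℝ) : ℂ) *
          (1 + phi1C κ θ ξ v ρ t k u * ((τ ^ ((1 : ℝ) / 8) : ℝ) : ℂ) +
            ((phi2R κ θ ξ v ρ t k u : ℝ) : ℂ) * ((τ ^ ((1 : ℝ) / 4) : ℝ) : ℂ)))
      =O[𝓝[>] (0 : ℝ)] fun τ : ℝ => τ ^ ((3 : ℝ) / 8) := by
  obtain ⟨x, hx⟩ : ∃ x : ℝ → ℝ, x = fun τ => τ ^ ((1 : ℝ) / 8) := ⟨_, rfl⟩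
  obtain ⟨M, C, hM, hC, hev⟩ := ev_facts κ θ ξ v ρ t hκ hθ hξ hv hρ ht k hk ustar hustar x hx
  obtain ⟨β, hβ⟩ : ∃ β, β = betaT κ ξ t := ⟨_, rfl⟩
  obtain ⟨V, hV⟩ : ∃ V, V = v * Real.exp (-(κ * t)) := ⟨_, rfl⟩
  obtain ⟨α, hα⟩ : ∃ α, α = 2 * κ * θ / ξ ^ 2 := ⟨_, rfl⟩
  obtain ⟨a0, ha0⟩ : ∃ a0, a0 = coefA0 κ θ ξ v ρ t k := ⟨_, rfl⟩
  obtain ⟨e0, he0⟩ : ∃ e0, e0 = coefE0 κ θ ξ v ρ t k := ⟨_, rfl⟩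
  obtain ⟨e1, he1⟩ : ∃ e1, e1 = a0 * (2 * α * β - V / 2) / (2 * k) := ⟨_, rfl⟩
  obtain ⟨f1, f2, f3, f4, -, -, f7⟩ :=
    coef_facts κ θ ξ v ρ t k hκ hθ hξ hv ht hk β V α a0 e0 hβ hV hα ha0 he0
  obtain ⟨g1, g2⟩ := phi_facts κ θ ξ v ρ t k u hκ hθ hξ hv ht hk β V α a0 e0 e1 hβ hV hα ha0 he0 he1
  have hβp : 0 < β := hβ ▸ betaT_pos hκ hξ ht
  have hVp : 0 < V := by rw [hV]; positivity
  have ha0ne : a0 ≠ 0 := by rintro h; rw [h] at f1; simp at f1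
  have hxt : Tendsto x (𝓝[>] 0) (𝓝 0) := by
    have h := (Real.continuousAt_rpow_const 0 ((1 : ℝ) / 8) (Or.inr (by norm_num))).tendsto
    rw [Real.zero_rpow (by norm_num)] at h
    rw [hx]
    exact h.mono_left nhdsWithin_le_nhds
  have hxpos : ∀ᶠ τ in 𝓝[>] (0 : ℝ), 0 < x τ := by
    filter_upwards [self_mem_nhdsWithin] with τ hτ
    rw [hx]; exact Real.rpow_pos_of_pos hτ _
  rw [← hβ, ← hV, ← hα] at hev
  -- the basic functions of `τ`
  obtain ⟨B0, hB0⟩ : ∃ f : ℝ → ℂ, f = fun τ => Bf κ ρ ξ (x τ ^ 4) (ustar τ) := ⟨_, rfl⟩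
  obtain ⟨B1, hB1⟩ : ∃ f : ℝ → ℂ, f = fun τ => deriv (Bf κ ρ ξ (x τ ^ 4)) (ustar τ) := ⟨_, rfl⟩
  obtain ⟨A1, hA1⟩ : ∃ f : ℝ → ℂ, f = fun τ => deriv (Af κ θ ρ ξ (x τ ^ 4)) (ustar τ) := ⟨_, rfl⟩
  obtain ⟨e, he⟩ : ∃ f : ℝ → ℝ, f = fun τ => 1 - 2 * β * (B0 τ).re := ⟨_, rfl⟩
  have hnus : ∀ τ, |ustar τ| ≤ M → ‖(ustar τ : ℂ)‖ ≤ M + 1 := fun τ h => by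
    rw [Complex.norm_real, Real.norm_eq_abs]; linarith
  have hBe : ∀ᶠ τ in 𝓝[>] (0 : ℝ), 1 - 2 * (β : ℂ) * B0 τ = e τ ∧ 0 < e τ ∧
      ((x τ ^ 4 : ℝ) : ℂ) * (A1 τ + (V : ℂ) * B1 τ / (e τ : ℂ) ^ 2 +
        2 * (α : ℂ) * β * B1 τ / (e τ : ℂ)) = k := by
    filter_upwards [hev] with τ ⟨_, _, _, _, _, _, b, hb, hb1, hb2, hb3⟩
    have hB : B0 τ = b := by rw [hB0]; exact hb
    have hE : e τ = 1 - 2 * β * b := by rw [he]; simp [hB]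
    refine ⟨by rw [hB, hE]; push_cast; ring, by rw [hE]; exact hb1, ?_⟩
    rw [hE, hA1, hB1]
    push_cast at hb3 ⊢
    exact hb3
  have hxn : ∀ᶠ τ in 𝓝[>] (0 : ℝ), ∀ n : ℕ, ‖x τ ^ n‖ = x τ ^ n := by
    filter_upwards [hxpos] with τ h n
    rw [Real.norm_of_nonneg (by positivity)]
  have hB1O : (fun τ => B1 τ - (ustar τ : ℂ)) =O[𝓝[>] (0 : ℝ)] fun τ => x τ ^ 4 := by
    refine IsBigO.of_bound C ?_
    filter_upwards [hev, hxn] with τ ⟨_, _, _, h, _, hu, _⟩ hn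
    rw [hn, hB1]; exact h _ (hnus τ hu)
  have hA1O : A1 =O[𝓝[>] (0 : ℝ)] fun τ => x τ ^ 4 := by
    refine IsBigO.of_bound C ?_
    filter_upwards [hev, hxn] with τ ⟨_, _, _, _, h, hu, _⟩ hn
    rw [hn, hA1]; exact h _ (hnus τ hu)
  have hB0O : (fun τ => B0 τ - (ustar τ : ℂ) ^ 2 / 2) =O[𝓝[>] (0 : ℝ)] fun τ => x τ ^ 4 := by
    refine IsBigO.of_bound C ?_
    filter_upwards [hev, hxn] with τ ⟨_, _, h, _, _, hu, _⟩ hn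
    rw [hn, hB0]; exact h _ (hnus τ hu)
  have hre : ∀ f : ℝ → ℂ, (fun τ => (f τ).re) =O[𝓝[>] (0 : ℝ)] f := fun f =>
    IsBigO.of_bound 1 (Eventually.of_forall fun τ => by
      rw [one_mul]; exact Complex.abs_re_le_norm _)
  obtain ⟨S1, S2⟩ := saddle_exp (𝓝[>] (0 : ℝ)) x ustar e (fun τ => (B1 τ).re) (fun τ => (A1 τ).re)
    β V k α a0 e0 hβp hVp hk f1 f2 f3 f4 hxt hxpos
    (by
      refine IsBigO.of_bound M ?_
      filter_upwards [hev] with τ ⟨_, _, _, _, _, hu, _⟩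
      simpa using hu)
    (by
      refine (((hre _).trans hB0O).const_mul_left (-2 * β)).congr_left fun τ => ?_
      rw [he]
      have : ((ustar τ : ℂ) ^ 2 / 2) = ((ustar τ ^ 2 / 2 : ℝ) : ℂ) := by push_cast; ring
      simp only [Complex.sub_re, this, Complex.ofReal_re]
      ring)
    (by
      refine ((hre _).trans hB1O).congr_left fun τ => ?_
      simp)
    ((hre _).trans hA1O)
    (hBe.mono fun τ h => h.2.1)
    (by
      filter_upwards [hBe] with τ ⟨_, _, h⟩
      have h' := congrArg Complex.re h
      rw [Complex.re_ofReal_mul, Complex.ofReal_re, Complex.add_re, Complex.add_re,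
        show (V : ℂ) * B1 τ / (e τ : ℂ) ^ 2 = ((V / e τ ^ 2 : ℝ) : ℂ) * B1 τ by push_cast; ring,
        show 2 * (α : ℂ) * β * B1 τ / (e τ : ℂ) = ((2 * α * β / e τ : ℝ) : ℂ) * B1 τ by
          push_cast; ring, Complex.re_ofReal_mul, Complex.re_ofReal_mul] at h'
      rw [← h']; ring)
  rw [← he1] at S2
  -- complex versions
  obtain ⟨X, hX⟩ : ∃ X : ℝ → ℂ, X = fun τ => (x τ : ℂ) := ⟨_, rfl⟩
  have hXt : Tendsto X (𝓝[>] 0) (𝓝 0) := by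
    have := (Complex.continuous_ofReal.tendsto 0).comp hxt
    rw [hX]; simpa [Function.comp_def] using this
  have hxX : ∀ n : ℕ, (fun τ => x τ ^ n) =O[𝓝[>] (0 : ℝ)] fun τ => X τ ^ n := fun n =>
    IsBigO.of_bound 1 (Eventually.of_forall fun τ => by rw [hX]; simp)
  have hXx : ∀ n : ℕ, (fun τ => X τ ^ n) =O[𝓝[>] (0 : ℝ)] fun τ => x τ ^ n := fun n =>
    IsBigO.of_bound 1 (Eventually.of_forall fun τ => by rw [hX]; simp)
  have hofR : ∀ f : ℝ → ℝ, (fun τ => (f τ : ℂ)) =O[𝓝[>] (0 : ℝ)] f := fun f =>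
    IsBigO.of_bound 1 (Eventually.of_forall fun τ => by simp)
  have h43 : (fun τ => X τ ^ 4) =O[𝓝[>] (0 : ℝ)] fun τ => X τ ^ 3 := X_pow hXt (by norm_num)
  have husE : Ex (𝓝[>] (0 : ℝ)) X (fun τ => (ustar τ : ℂ)) a0 0 (-(a0 * e0 / 2)) := by
    refine ((((hofR _).trans S1).trans (hxX 4)).trans h43).congr_left fun τ => ?_
    rw [hX]; push_cast; ring
  have hB1E : Ex (𝓝[>] (0 : ℝ)) X B1 a0 0 (-(a0 * e0 / 2)) := by
    refine (husE.add (Ex.small ((hB1O.trans (hxX 4)).trans h43))).congr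
      (Eventually.of_forall fun τ => by ring) (by ring) (by ring) (by ring)
  obtain ⟨ε, hε⟩ : ∃ f : ℝ → ℂ, f = fun τ => (e τ : ℂ) / (x τ : ℂ) ^ 2 := ⟨_, rfl⟩
  have hεE : Ex (𝓝[>] (0 : ℝ)) X ε e0 0 e1 := by
    refine ((((hofR _).trans S2).trans (hxX 4)).trans h43).congr_left fun τ => ?_
    rw [hX, hε]; push_cast; ring
  -- the shifted point
  obtain ⟨h, hh⟩ : ∃ f : ℝ → ℂ, f = fun τ => Complex.I * (u : ℂ) * (x τ : ℂ) ^ 3 := ⟨_, rfl⟩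
  have hht : Tendsto h (𝓝[>] 0) (𝓝 0) := by
    have := (hXt.pow 3).const_mul (Complex.I * (u : ℂ))
    rw [hX] at this
    rw [hh]; simpa using this
  have hzt : Tendsto (fun τ => (ustar τ : ℂ) + h τ) (𝓝[>] 0) (𝓝 (a0 : ℂ)) := by
    simpa using (husE.tendsto hXt).add hht
  have hst : Tendsto (fun τ => x τ ^ 4) (𝓝[>] 0) (𝓝 0) := by simpa using hxt.pow 4
  have hnorm : ∀ τ, 0 < x τ → ‖h τ‖ = |u| * x τ ^ 3 := fun τ hτ => by
    rw [hh]; simp [abs_of_pos hτ]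
  obtain ⟨Bz, hBz⟩ : ∃ f : ℝ → ℂ, f = fun τ => Bf κ ρ ξ (x τ ^ 4) (ustar τ + h τ) := ⟨_, rfl⟩
  obtain ⟨A0, hA0⟩ : ∃ f : ℝ → ℂ, f = fun τ => Af κ θ ρ ξ (x τ ^ 4) (ustar τ) := ⟨_, rfl⟩
  obtain ⟨Az, hAz⟩ : ∃ f : ℝ → ℂ, f = fun τ => Af κ θ ρ ξ (x τ ^ 4) (ustar τ + h τ) := ⟨_, rfl⟩
  obtain ⟨σ, hσ⟩ : ∃ f : ℝ → ℂ, f = fun τ => (Bz τ - B0 τ - B1 τ * h τ) / (x τ : ℂ) ^ 6 := ⟨_, rfl⟩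
  obtain ⟨Ac, hAc⟩ : ∃ f : ℝ → ℂ, f = fun τ => Az τ - A0 τ - A1 τ * h τ := ⟨_, rfl⟩
  have hzn : ∀ᶠ τ in 𝓝[>] (0 : ℝ), ‖(ustar τ : ℂ) + h τ‖ ≤ M + 1 := by
    have h1 := hht.norm
    rw [norm_zero] at h1
    filter_upwards [hev, h1.eventually_le_const (zero_lt_one)] with τ ⟨_, _, _, _, _, hu, _⟩ h2
    refine (norm_add_le _ _).trans ?_
    rw [Complex.norm_real, Real.norm_eq_abs]; linarith
  have htay : ∀ᶠ τ in 𝓝[>] (0 : ℝ),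
      ‖Bz τ - B0 τ - B1 τ * h τ - h τ ^ 2 / 2‖ ≤ 2 * (C * x τ ^ 4) * ‖h τ‖ ∧
      ‖Ac τ‖ ≤ 2 * (C * x τ ^ 4) * ‖h τ‖ := by
    filter_upwards [hev, hzn] with τ ⟨_, q1, _, q2, q3, hu, _⟩ hz
    rw [hAc, hBz, hB0, hB1, hAz, hA0, hA1]
    exact taylor_bds κ θ ρ ξ (x τ ^ 4) C (M + 1) (ustar τ) (h τ) (hnus τ hu) hz q1 q2 q3
  have hσO : (fun τ => σ τ + (u : ℂ) ^ 2 / 2) =O[𝓝[>] (0 : ℝ)] X := by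
    refine IsBigO.of_bound (2 * C * |u|) ?_
    filter_upwards [htay, hxpos] with τ ⟨hb, _⟩ hp
    have hxc : (x τ : ℂ) ≠ 0 := by exact_mod_cast hp.ne'
    have h1 : σ τ + (u : ℂ) ^ 2 / 2 =
        (Bz τ - B0 τ - B1 τ * h τ - h τ ^ 2 / 2) / (x τ : ℂ) ^ 6 := by
      have h2 : h τ ^ 2 = -((u : ℂ) ^ 2 * (x τ : ℂ) ^ 6) := by
        rw [hh]; linear_combination ((u : ℂ) ^ 2 * (x τ : ℂ) ^ 6) * Complex.I_sq
      rw [h2, hσ]; field_simp; ring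
    rw [h1, norm_div, norm_pow, Complex.norm_real, Real.norm_of_nonneg hp.le,
      div_le_iff₀ (by positivity), hX, Complex.norm_real, Real.norm_of_nonneg hp.le]
    rw [hnorm τ hp] at hb
    refine hb.trans (le_of_eq ?_)
    ring
  have hAcO : Ac =O[𝓝[>] (0 : ℝ)] fun τ => X τ ^ 3 := by
    refine IsBigO.trans ?_ ((hxX 7).trans (X_pow hXt (by norm_num)))
    refine IsBigO.of_bound (2 * C * |u|) ?_
    filter_upwards [htay, hxpos, hxn] with τ ⟨_, hb⟩ hp hn
    rw [hnorm τ hp] at hb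
    rw [hn]
    refine hb.trans (le_of_eq ?_)
    ring
  obtain ⟨Q, hQ⟩ : ∃ f : ℝ → ℂ, f = fun τ =>
    2 * (β : ℂ) * ((Complex.I * u * B1 τ + X τ ^ 3 * σ τ) * (ε τ)⁻¹) := ⟨_, rfl⟩
  have hβc : (β : ℂ) ≠ 0 := by exact_mod_cast hβp.ne'
  have he0c : (e0 : ℂ) ≠ 0 := by exact_mod_cast f3.ne'
  have main := exponent_exp (𝓝[>] (0 : ℝ)) X ε B1 σ Ac hXt β V α a0 e0 e1 u hβc
    (by exact_mod_cast f1) he0c hεE hB1E hσO hAcO Q (fun τ => by rw [hQ])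
  -- `1 - X Q ≠ 0`
  have hne : ∀ᶠ τ in 𝓝[>] (0 : ℝ), 1 - X τ * Q τ ≠ 0 := by
    have hσt : Tendsto σ (𝓝[>] 0) (𝓝 (-((u : ℂ) ^ 2 / 2))) := by
      have := (hσO.trans_tendsto hXt).sub_const ((u : ℂ) ^ 2 / 2)
      simpa using this
    have hQt := (((hB1E.tendsto hXt).const_mul (Complex.I * (u : ℂ))).add
      ((hXt.pow 3).mul hσt)).mul ((hεE.tendsto hXt).inv₀ he0c) |>.const_mul (2 * (β : ℂ))
    have h1 := (hXt.mul hQt).const_sub 1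
    rw [zero_mul, sub_zero] at h1
    rw [hQ]
    exact h1.eventually_ne one_ne_zero
  have hzne : ∀ᶠ τ in 𝓝[>] (0 : ℝ), (ustar τ : ℂ) + h τ ≠ 0 ∧
      (ustar τ : ℂ) + h τ ≠ ((x τ ^ 4 : ℝ) : ℂ) ∧ Qf κ ρ ξ (x τ ^ 4) (ustar τ + h τ) ≠ 0 := by
    have ha0c : (a0 : ℂ) ≠ 0 := by exact_mod_cast ha0ne
    have h1 := hzt.eventually_ne ha0c
    have h2 : Tendsto (fun τ => (ustar τ : ℂ) + h τ - ((x τ ^ 4 : ℝ) : ℂ)) (𝓝[>] 0) (𝓝 (a0 : ℂ)) := by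
      have := hzt.sub ((Complex.continuous_ofReal.tendsto 0).comp hst)
      simpa using this
    have h3 : Tendsto (fun τ => Qf κ ρ ξ (x τ ^ 4) (ustar τ + h τ)) (𝓝[>] 0)
        (𝓝 (Qf κ ρ ξ 0 (a0 : ℂ))) :=
      Qf_tendsto κ ρ ξ _ _ _ _ _ hst hzt
    filter_upwards [h1, h2.eventually_ne ha0c, h3.eventually_ne (Qf_zero_ne κ ρ ξ hξ hρ a0 ha0ne)]
      with τ q1 q2 q3
    exact ⟨q1, sub_ne_zero.mp q2, q3⟩
  -- the exponent
  have hphi : ∀ᶠ τ in 𝓝[>] (0 : ℝ), Complex.exp (Ac τ + V / (2 * β) * ((ε τ)⁻¹ *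
        (Q τ * Q τ * (1 - X τ * Q τ)⁻¹)) +
        V * (X τ ^ 2 * σ τ * ((ε τ)⁻¹ * (ε τ)⁻¹)) - α * (Complex.log (1 - X τ * Q τ) + X τ * Q τ) +
        2 * α * β * (X τ ^ 4 * σ τ * (ε τ)⁻¹)) = hestPhi κ θ ξ v ρ t k ustar τ u := by
    filter_upwards [hev, hBe, hne, hzne, hzn, hxpos] with τ ⟨hτ, q1, _, _, _, hu, b, _, _, hL, _⟩
      ⟨w1, w2, w3⟩ n1 ⟨z1, z2, z3⟩ zn hp
    obtain ⟨r1, r2, r3, r4, r5, r6, r7⟩ := rpow_facts τ (x τ) hτ (by rw [hx])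
    have hLz := hestLambdaC_eq κ θ ξ v ρ t hξ τ (x τ ^ 4) (by positivity) r2 (ustar τ + h τ)
      z1 z2 z3 (q1 _ zn).1 (q1 _ zn).2
    have hXx : X τ = (x τ : ℂ) := by rw [hX]
    have hhx : h τ = Complex.I * (u : ℂ) * (x τ : ℂ) ^ 3 := by rw [hh]
    have id := exponent_id (x τ) (e τ) V β α u k (A0 τ) (A1 τ) (Az τ) (B0 τ) (B1 τ) (Bz τ) (σ τ)
      (ε τ) (Q τ) (Ac τ) hp w2 hβc w1 (by rw [← w3]; push_cast; ring) (by rw [hσ, hh]) (by rw [hε])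
      (by rw [hQ, hX]) (by rw [hAc, hh]) (by rw [← hXx]; exact n1)
    rw [hXx, ← id, hestPhi, r4, r6, r7]
    have e1 : ((ustar τ : ℝ) : ℂ) + Complex.I * (u : ℂ) * ((x τ ^ 3 : ℝ) : ℂ) = ustar τ + h τ := by
      rw [hhx]; push_cast; ring
    rw [e1, hLz, hL, Gf, Gf, ← hβ, ← hα, hA0, hAz, hB0, hBz, hV]
    push_cast
    congr 1
    ring
  refine (((main.congr hphi rfl rfl rfl).congr' ?_ (EventuallyEq.refl _ _)).trans (hXx 3)).trans ?_
  · filter_upwards [self_mem_nhdsWithin] with τ hτ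
    obtain ⟨r1, r2, r3, r4, r5, r6, r7⟩ := rpow_facts τ (x τ) hτ (by rw [hx])
    have hz : Real.exp (-(coefZeta κ θ ξ v ρ t k) ^ 2 * u ^ 2 / 2) =
        Real.exp (-2 * V * u ^ 2 / e0 ^ 3) := by
      rw [f7]; congr 1; ring
    rw [hz, r5, g1, g2, show τ ^ ((1 : ℝ) / 8) = x τ by rw [hx], hX]
    push_cast
    ring
  · refine IsBigO.of_bound 1 ?_
    filter_upwards [self_mem_nhdsWithin] with τ hτ
    obtain ⟨r1, r2, r3, r4, r5, r6, r7⟩ := rpow_facts τ (x τ) hτ (by rw [hx])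
    rw [r4, one_mul]

end
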